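/- Fix 0 < b ≤ a, t > 0, and δ > 0. For m ≤ n and a weight function ω : {1,…,m}×{1,…,n} → [b², a²], let C(ω) := (√(ω(i,j))) ∈ ℝ^{m×n}, A(ω) := [[0, C(ω)], [−C(ω)ᵀ, 0]] of size N = m+n, Φ(t, A(ω)) its weighted matching polynomial (times √t if N is odd), and Y_{A(ω)} the random skew-symmetric matrix built from i.i.d. standard Gaussians. Then lim_{n→∞} sup_{m ≤ n} sup_{ω : {1,…,m}×{1,…,n} → [b²,a²]} Pr( (1/(m+n)) | log det(√t I_N + Y_{A(ω)}) − log Φ(t, A(ω)) | > δ ) = 0. -/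

import Mathlib

/-!
By the Godsil–Gutman identity `E det(√t I + Y_A) = Φ(t, A)`, so a Markov inequality for
`x - 1 - log x ≥ 0` reduces the claim to an `o(n)` bound, uniform in `m` and `ω`, on the Jensen gap
`log E Z - E log Z` of `Z = det(√t I + Y_A)`. In the bipartite case
`Z = √t ^ (m + n) det(I + HᵀH)`, where `H` is an `m × n` matrix with independent centred Gaussian
entries.

The rows of `H` are exposed one at a time. Given the first row `x`, the conditional mean of the
determinant is `E[det A (1 + xᵀA⁻¹x)]`, where `A` is the identity plus the Gram matrix of the other
rows, and the gap splits into the gap of this function of `x` plus the mean of the gaps given `x`,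
which are of the same form with `I` replaced by `I + xxᵀ`. The conditional mean is proportional to
`1 + xᵀBx`, where `B` is an average of the matrices `A⁻¹`. Since `0 ≤ A⁻¹ ≤ I`, with `A⁻¹` the
identity off the span of the rows, `0 ≤ B ≤ I` and `tr B ≥ q` as long as the rows leave `q`
directions free. The variance of `1 + xᵀBx` is then of order `tr B² ≤ tr B` and its mean of order
at least `tr B`, so this row costs `O(log n / q)`. When `m` is close to `n`, the at most `q` surplus
rows cost `O(log n)` each. With `q = √n` the total is `O(√n log n)`.
-/

open MeasureTheory ProbabilityTheory Matrix

/-- Total weighted `k`-matching of the weighted graph encoded by the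
skew-symmetric matrix `A`. -/
noncomputable def phiW {N : ℕ} (A : Matrix (Fin N) (Fin N) ℝ) (k : ℕ) : ℝ :=
  ∑ M ∈ Finset.univ.filter
      (fun M : Finset (Fin N × Fin N) =>
        ((∀ p ∈ M, p.1 < p.2) ∧
          ∀ p ∈ M, ∀ q ∈ M, p ≠ q →
            p.1 ≠ q.1 ∧ p.1 ≠ q.2 ∧ p.2 ≠ q.1 ∧ p.2 ≠ q.2) ∧ M.card = k),
    ∏ p ∈ M, (A p.1 p.2) ^ 2

/-- The weighted matching polynomial `Φ(t, A)`. -/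
noncomputable def PhiW {N : ℕ} (A : Matrix (Fin N) (Fin N) ℝ) (t : ℝ) : ℝ :=
  ∑ k ∈ Finset.range (N / 2 + 1), phiW A k * t ^ (N / 2 - k)

/-- `Φ(t,A)`, multiplied by `√t` when `N` is odd. -/
noncomputable def PhiFull {N : ℕ} (A : Matrix (Fin N) (Fin N) ℝ) (t : ℝ) : ℝ :=
  (if Even N then 1 else Real.sqrt t) * PhiW A t

/-- Index type of the strictly upper-triangular positions. -/
abbrev PairIdx (N : ℕ) := {p : Fin N × Fin N // p.1 < p.2}

/-- The canonical product of standard Gaussian measures, one for each edge slot. -/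
noncomputable def gaussPi (N : ℕ) : Measure (PairIdx N → ℝ) :=
  Measure.pi fun _ => gaussianReal 0 1

/-- The sample `Y_A(ξ)` of the random skew-symmetric matrix `Y_A`. -/
noncomputable def sampleY {N : ℕ} (A : Matrix (Fin N) (Fin N) ℝ)
    (ξ : PairIdx N → ℝ) : Matrix (Fin N) (Fin N) ℝ :=
  Matrix.of fun i j =>
    if h : i < j then A i j * ξ ⟨(i, j), h⟩
    else if h : j < i then A i j * ξ ⟨(j, i), h⟩
    else 0

/-- `log Φ̃(t, A) = E log det(√t I_N + Y_A)` for i.i.d. standard Gaussian entries. -/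
noncomputable def logPhiTilde {N : ℕ} (t : ℝ) (A : Matrix (Fin N) (Fin N) ℝ) : ℝ :=
  ∫ ξ, Real.log ((Real.sqrt t • (1 : Matrix (Fin N) (Fin N) ℝ) + sampleY A ξ).det) ∂(gaussPi N)

/-- The constant `C₁ = -(1/√(2π)) ∫ log(x²) e^{-x²/2} dx`. -/
noncomputable def C1 : ℝ :=
  -(Real.sqrt (2 * Real.pi))⁻¹ * ∫ x : ℝ, Real.log (x ^ 2) * Real.exp (-x ^ 2 / 2)

/-- The skew-symmetric matrix of the weighted complete bipartite graph `K_{m,n,ω}`,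
`A(ω) = [[0, C(ω)], [-C(ω)ᵀ, 0]]` with `C(ω)_{ij} = √(ω(i,j))`, reindexed to
`Fin (m + n)`. -/
noncomputable def bipartiteSkew {m n : ℕ} (w : Fin m → Fin n → ℝ) :
    Matrix (Fin (m + n)) (Fin (m + n)) ℝ :=
  Matrix.reindex finSumFinEquiv finSumFinEquiv
    (Matrix.fromBlocks 0 (Matrix.of fun i j => Real.sqrt (w i j))
      (-(Matrix.of fun i j => Real.sqrt (w i j))ᵀ) 0)

section LogJensenGap

variable {α β : Type*} [MeasurableSpace α] [MeasurableSpace β] {μ : Measure α} {ν : Measure β}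

/-- The defect `log E X - E log X ≥ 0` in Jensen's inequality for the logarithm. -/
noncomputable def logJensenGap (μ : Measure α) (X : α → ℝ) : ℝ :=
  Real.log (∫ ω, X ω ∂μ) - ∫ ω, Real.log (X ω) ∂μ

lemma integrable_log_of_le [IsFiniteMeasure μ] {X : α → ℝ} {c : ℝ} (hX : Integrable X μ)
    (hc : 0 < c) (hcX : ∀ᵐ ω ∂μ, c ≤ X ω) : Integrable (fun ω => Real.log (X ω)) μ := by
  refine ((integrable_const |Real.log c|).add hX).mono'
    (Real.measurable_log.comp_aemeasurable hX.aemeasurable).aestronglyMeasurable ?_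
  filter_upwards [hcX] with ω hω
  have hpos := hc.trans_le hω
  have lower := Real.log_le_log hc hω
  have upper := Real.log_le_sub_one_of_pos hpos
  rw [Pi.add_apply, Real.norm_eq_abs, abs_le]
  constructor <;> linarith [neg_abs_le (Real.log c), abs_nonneg (Real.log c)]

lemma le_integral_of_ae_le [IsProbabilityMeasure μ] {X : α → ℝ} {c : ℝ} (hX : Integrable X μ)
    (hcX : ∀ᵐ ω ∂μ, c ≤ X ω) : c ≤ ∫ ω, X ω ∂μ := by
  simpa using integral_mono_ae (integrable_const c) hX hcX

lemma logJensenGap_const_mul [IsProbabilityMeasure μ] {X : α → ℝ} {a c : ℝ} (ha : 0 < a)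
    (hX : Integrable X μ) (hc : 0 < c) (hcX : ∀ ω, c ≤ X ω) :
    logJensenGap μ (fun ω => a * X ω) = logJensenGap μ X := by
  have hmean : 0 < ∫ ω, X ω ∂μ := hc.trans_le (le_integral_of_ae_le hX (ae_of_all μ hcX))
  have hlog (ω : α) : Real.log (a * X ω) = Real.log a + Real.log (X ω) :=
    Real.log_mul ha.ne' (hc.trans_le (hcX ω)).ne'
  simp only [logJensenGap, hlog, integral_const_mul, Real.log_mul ha.ne' hmean.ne',
    integral_add (integrable_const _) (integrable_log_of_le hX hc (ae_of_all μ hcX)),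
    integral_const, probReal_univ, one_smul]
  ring

lemma logJensenGap_comp {X : β → ℝ} {f : α → β} (hf : MeasurePreserving f μ ν)
    (hX : AEStronglyMeasurable X ν) : logJensenGap μ (fun ω => X (f ω)) = logJensenGap ν X := by
  have hlogX : AEStronglyMeasurable (fun ω => Real.log (X ω)) ν :=
    (Real.measurable_log.comp_aemeasurable hX.aemeasurable).aestronglyMeasurable
  simp only [logJensenGap]
  rw [← hf.map_eq] at hX hlogX ⊢
  rw [integral_map hf.aemeasurable hX, integral_map hf.aemeasurable hlogX]

lemma logJensenGap_eq_integral [IsProbabilityMeasure μ] {X : α → ℝ} {c : ℝ} (hX : Integrable X μ)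
    (hc : 0 < c) (hcX : ∀ ω, c ≤ X ω) :
    logJensenGap μ X = ∫ ω, -Real.log (X ω / ∫ ω', X ω' ∂μ) ∂μ := by
  have hmean : 0 < ∫ ω, X ω ∂μ := hc.trans_le (le_integral_of_ae_le hX (ae_of_all μ hcX))
  have hlog (ω : α) : -Real.log (X ω / ∫ ω', X ω' ∂μ) =
      Real.log (∫ ω', X ω' ∂μ) - Real.log (X ω) := by
    rw [Real.log_div (hc.trans_le (hcX ω)).ne' hmean.ne', neg_sub]
  simp only [logJensenGap, hlog, integral_const, probReal_univ, one_smul,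
    integral_sub (integrable_const _) (integrable_log_of_le hX hc (ae_of_all μ hcX))]

/-- Below `1 / 2`, where `(1 - r) ^ 2 ≥ 1 / 4`, the a priori bound `l` is absorbed by the term
`4 * l * (1 - r) ^ 2`; elsewhere `-log r ≤ r⁻¹ - 1` suffices. -/
lemma neg_log_le_one_sub_add_sq {r l : ℝ} (hr : 0 < r) (hl : 0 ≤ l) (hrl : -Real.log r ≤ l) :
    -Real.log r ≤ (1 - r) + (2 + 4 * l) * (1 - r) ^ 2 := by
  rcases lt_or_ge r (1 / 2) with hsmall | hlarge
  · nlinarith [sq_nonneg (1 - r), mul_nonneg hl (show 0 ≤ (1 - r) ^ 2 - 1 / 4 by nlinarith)]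
  · have hinv : -Real.log r ≤ r⁻¹ - 1 := by
      simpa only [Real.log_inv] using Real.log_le_sub_one_of_pos (inv_pos.2 hr)
    have hquad : r⁻¹ - 1 ≤ (1 - r) + 2 * (1 - r) ^ 2 := by
      rw [sub_le_iff_le_add, inv_le_iff_one_le_mul₀ hr]
      nlinarith [mul_nonneg (sq_nonneg (1 - r)) (show 0 ≤ r - 1 / 2 by linarith)]
    nlinarith [mul_nonneg hl (sq_nonneg (1 - r))]

/-- The term linear in `1 - X / E X` integrates to zero. -/
lemma logJensenGap_le_variance [IsProbabilityMeasure μ] {X : α → ℝ} {c l : ℝ} (hX : MemLp X 2 μ)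
    (hc : 0 < c) (hcX : ∀ ω, c ≤ X ω) (hl : Real.log (μ[X] / c) ≤ l) :
    logJensenGap μ X ≤ (2 + 4 * l) * (Var[X; μ] / μ[X] ^ 2) := by
  have hXint : Integrable X μ := hX.integrable one_le_two
  have hc_le_mean : c ≤ μ[X] := le_integral_of_ae_le hXint (ae_of_all μ hcX)
  have hmean : 0 < μ[X] := hc.trans_le hc_le_mean
  have hl0 : 0 ≤ l := (Real.log_nonneg ((one_le_div hc).2 hc_le_mean)).trans hl
  have hpointwise (ω : α) : -Real.log (X ω / μ[X]) ≤
      (1 - X ω / μ[X]) + (2 + 4 * l) * (1 - X ω / μ[X]) ^ 2 := by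
    refine neg_log_le_one_sub_add_sq (div_pos (hc.trans_le (hcX ω)) hmean) hl0 (le_trans ?_ hl)
    rw [← Real.log_inv, inv_div]
    exact Real.log_le_log (div_pos hmean (hc.trans_le (hcX ω)))
      (div_le_div_of_nonneg_left hmean.le hc (hcX ω))
  have hlinear : Integrable (fun ω => 1 - X ω / μ[X]) μ :=
    (integrable_const 1).sub (hXint.div_const _)
  have hsquare : Integrable (fun ω => (1 - X ω / μ[X]) ^ 2) μ :=
    ((memLp_const 1).sub (by simpa only [div_eq_inv_mul] using hX.const_mul (μ[X])⁻¹)).integrable_sq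
  have hlinear_zero : ∫ ω, (1 - X ω / μ[X]) ∂μ = 0 := by
    rw [integral_sub (integrable_const 1) (hXint.div_const _), integral_div, div_self hmean.ne']
    simp
  have hvariance : ∫ ω, (1 - X ω / μ[X]) ^ 2 ∂μ = Var[X; μ] / μ[X] ^ 2 := by
    rw [variance_eq_integral hXint.aemeasurable, ← integral_div]
    congr 1 with ω
    field_simp
    ring
  rw [logJensenGap_eq_integral hXint hc hcX]
  calc ∫ ω, -Real.log (X ω / μ[X]) ∂μ
      ≤ ∫ ω, ((1 - X ω / μ[X]) + (2 + 4 * l) * (1 - X ω / μ[X]) ^ 2) ∂μ := by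
        refine integral_mono (Integrable.neg (integrable_log_of_le (hXint.div_const _)
          (div_pos hc hmean) (ae_of_all μ fun ω => ?_)))
          (hlinear.add (hsquare.const_mul _)) hpointwise
        exact div_le_div_of_nonneg_right (hcX ω) hmean.le
    _ = (2 + 4 * l) * (Var[X; μ] / μ[X] ^ 2) := by
        rw [integral_add hlinear (hsquare.const_mul _), integral_const_mul, hlinear_zero,
          hvariance, zero_add]

/-- The gap of `X` is the gap of its partial mean plus the mean of the conditional gaps. -/
lemma logJensenGap_prod_le [IsProbabilityMeasure μ] [IsProbabilityMeasure ν] {X : α × β → ℝ}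
    {c l₁ l₂ : ℝ} (hX : Integrable X (μ.prod ν)) (hc : 0 < c) (hcX : ∀ p, c ≤ X p)
    (hl₁ : logJensenGap μ (fun x => ∫ y, X (x, y) ∂ν) ≤ l₁)
    (hl₂ : ∀ x, logJensenGap ν (fun y => X (x, y)) ≤ l₂) :
    logJensenGap (μ.prod ν) X ≤ l₁ + l₂ := by
  have hlogX := integrable_log_of_le hX hc (ae_of_all _ hcX)
  have hlog_mean : Integrable (fun x => Real.log (∫ y, X (x, y) ∂ν)) μ := by
    refine integrable_log_of_le hX.integral_prod_left hc ?_
    filter_upwards [hX.prod_right_ae] with x hx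
    exact le_integral_of_ae_le hx (ae_of_all ν fun y => hcX (x, y))
  have hfibres : ∫ x, Real.log (∫ y, X (x, y) ∂ν) ∂μ ≤
      ∫ x, ∫ y, Real.log (X (x, y)) ∂ν ∂μ + l₂ := by
    have := integral_mono (hlog_mean.sub hlogX.integral_prod_left) (integrable_const l₂) hl₂
    simp only [Pi.sub_apply, integral_sub hlog_mean hlogX.integral_prod_left, integral_const,
      probReal_univ, one_smul] at this
    linarith
  rw [logJensenGap] at hl₁ ⊢
  rw [integral_prod _ hX, integral_prod _ hlogX]
  linarith

lemma logJensenGap_prod_le_add_log [IsProbabilityMeasure μ] [IsProbabilityMeasure ν]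
    {X : α × β → ℝ} {Y : β → ℝ} {c C : ℝ} (hX : Integrable X (μ.prod ν)) (hY : Integrable Y ν)
    (hc : 0 < c) (hcY : ∀ y, c ≤ Y y) (hYX : ∀ x y, Y y ≤ X (x, y))
    (hC : 0 < C) (hXY : ∀ y, ∫ x, X (x, y) ∂μ ≤ C * Y y) :
    logJensenGap (μ.prod ν) X ≤ logJensenGap ν Y + Real.log C := by
  have hcX (p : α × β) : c ≤ X p := (hcY p.2).trans (hYX p.1 p.2)
  have hmeanX : 0 < ∫ p, X p ∂μ.prod ν := hc.trans_le (le_integral_of_ae_le hX (ae_of_all _ hcX))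
  have hmeanY : 0 < ∫ y, Y y ∂ν := hc.trans_le (le_integral_of_ae_le hY (ae_of_all _ hcY))
  have hmean : Real.log (∫ p, X p ∂μ.prod ν) ≤ Real.log C + Real.log (∫ y, Y y ∂ν) := by
    rw [← Real.log_mul hC.ne' hmeanY.ne']
    refine Real.log_le_log hmeanX ?_
    rw [integral_prod_symm _ hX, ← integral_const_mul]
    exact integral_mono hX.integral_prod_right (hY.const_mul C) hXY
  have hlog : ∫ y, Real.log (Y y) ∂ν ≤ ∫ p, Real.log (X p) ∂μ.prod ν := by
    have hlogY := (integrable_log_of_le hY hc (ae_of_all _ hcY)).comp_snd μ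
    calc ∫ y, Real.log (Y y) ∂ν = ∫ p, Real.log (Y p.2) ∂μ.prod ν := by
          simpa using (integral_fun_snd (μ := μ) fun y => Real.log (Y y)).symm
      _ ≤ ∫ p, Real.log (X p) ∂μ.prod ν :=
          integral_mono hlogY (integrable_log_of_le hX hc (ae_of_all _ hcX)) fun p =>
            Real.log_le_log (hc.trans_le (hcY p.2)) (hYX p.1 p.2)
  rw [logJensenGap, logJensenGap]
  linarith

/-- Markov's inequality for `X / E X - 1 - log (X / E X)`, a nonnegative variable whose mean is the
Jensen gap. -/
lemma measureReal_lt_abs_log_sub_log_integral_le [IsProbabilityMeasure μ] {X : α → ℝ} {c s : ℝ}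
    (hX : Integrable X μ) (hc : 0 < c) (hcX : ∀ ω, c ≤ X ω) (hs : 1 < s) :
    μ.real {ω | s < |Real.log (X ω) - Real.log (∫ ω', X ω' ∂μ)|} ≤
      logJensenGap μ X / (s - 1) := by
  set M := ∫ ω, X ω ∂μ with hM
  have hMpos : 0 < M := hc.trans_le (le_integral_of_ae_le hX (ae_of_all μ hcX))
  have hlogX := integrable_log_of_le hX hc (ae_of_all μ hcX)
  set Z : α → ℝ := fun ω => Real.log (X ω) - Real.log M
  have hexp (ω : α) : X ω / M = Real.exp (Z ω) := by
    rw [Real.exp_sub, Real.exp_log (hc.trans_le (hcX ω)), Real.exp_log hMpos]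
  have hlinear : Integrable (fun ω => X ω / M - 1) μ := (hX.div_const M).sub (integrable_const 1)
  have hZint : Integrable Z μ := hlogX.sub (integrable_const _)
  have hnonneg (ω : α) : 0 ≤ X ω / M - 1 - Z ω := by
    linarith [Real.add_one_le_exp (Z ω), hexp ω]
  have hmean : ∫ ω, (X ω / M - 1 - Z ω) ∂μ = logJensenGap μ X := by
    rw [integral_sub hlinear hZint, integral_sub (hX.div_const M) (integrable_const 1),
      integral_sub hlogX (integrable_const _), integral_div, ← hM, div_self hMpos.ne']
    simp [logJensenGap, ← hM]
  have hsubset : {ω | s < |Z ω|} ⊆ {ω | s - 1 ≤ X ω / M - 1 - Z ω} := by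
    intro ω hω
    rw [Set.mem_ofPred_eq] at hω ⊢
    rw [hexp]
    rcases le_total 0 (Z ω) with hpos | hneg
    · rw [abs_of_nonneg hpos] at hω
      nlinarith [Real.quadratic_le_exp_of_nonneg hpos, sq_nonneg (Z ω - 1)]
    · rw [abs_of_nonpos hneg] at hω
      linarith [Real.exp_pos (Z ω)]
  have hs' : 0 < s - 1 := by linarith
  rw [le_div_iff₀ hs', mul_comm, ← hmean]
  calc (s - 1) * μ.real {ω | s < |Z ω|}
      ≤ (s - 1) * μ.real {ω | s - 1 ≤ X ω / M - 1 - Z ω} :=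
        mul_le_mul_of_nonneg_left (measureReal_mono hsubset) hs'.le
    _ ≤ ∫ ω, (X ω / M - 1 - Z ω) ∂μ :=
        mul_meas_ge_le_integral_of_nonneg (ae_of_all μ hnonneg) (hlinear.sub hZint) (s - 1)

end LogJensenGap

section SpikedMatrices

variable {ι κ : Type*} [Fintype κ]

lemma rank_add_le_rank_add_rank (A B : Matrix ι κ ℝ) : (A + B).rank ≤ A.rank + B.rank := by
  rw [rank, mulVecLin_add]
  refine (Submodule.finrank_mono (t := A.mulVecLin.range ⊔ B.mulVecLin.range) ?_).trans
    (Submodule.finrank_add_le_finrank_add_finrank _ _)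
  rintro _ ⟨x, rfl⟩
  exact Submodule.add_mem_sup (LinearMap.mem_range_self _ x) (LinearMap.mem_range_self _ x)

variable [Fintype ι] [DecidableEq κ]

/-- `0 ≤ B ≤ 1` and `q ≤ tr B`. Unlike orthogonal projections of rank `q`, such matrices are stable
under averaging. -/
structure IsShrinkage (q : ℝ) (B : Matrix κ κ ℝ) : Prop where
  posSemidef : B.PosSemidef
  posSemidef_one_sub : (1 - B).PosSemidef
  le_trace : q ≤ B.trace

namespace IsShrinkage

variable {q : ℝ} {B : Matrix κ κ ℝ}

/-- `B - B ^ 2 = B (1 - B) B + (1 - B) B (1 - B)`. -/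
lemma posSemidef_sub_mul_self (hB : IsShrinkage q B) : (B - B * B).PosSemidef := by
  have hBH : Bᴴ = B := hB.posSemidef.1
  have hBH' : (1 - B)ᴴ = 1 - B := hB.posSemidef_one_sub.1
  have h := (hB.posSemidef_one_sub.mul_mul_conjTranspose_same B).add
    (hB.posSemidef.mul_mul_conjTranspose_same (1 - B))
  rw [hBH, hBH'] at h
  convert h using 1
  noncomm_ring

lemma trace_mul_self_le (hB : IsShrinkage q B) : (B * B).trace ≤ B.trace := by
  simpa only [trace_sub, sub_nonneg] using hB.posSemidef_sub_mul_self.trace_nonneg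

lemma apply_self_nonneg (hB : IsShrinkage q B) (i : κ) : 0 ≤ B i i :=
  hB.posSemidef.diag_nonneg

lemma apply_self_le_one (hB : IsShrinkage q B) (i : κ) : B i i ≤ 1 := by
  simpa using hB.posSemidef_one_sub.diag_nonneg (i := i)

lemma apply_comm (hB : IsShrinkage q B) (i j : κ) : B i j = B j i := by
  simpa using hB.posSemidef.1.apply j i

lemma abs_apply_le_one (hB : IsShrinkage q B) (i j : κ) : |B i j| ≤ 1 := by
  have hdiag : (B * B) i i ≤ B i i := by
    simpa only [Matrix.sub_apply, sub_nonneg] using hB.posSemidef_sub_mul_self.diag_nonneg (i := i)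
  have hsq : B i j ^ 2 ≤ (B * B) i i := by
    rw [mul_apply]
    refine le_trans (le_of_eq ?_)
      (Finset.single_le_sum (fun l _ => ?_) (Finset.mem_univ j))
    · rw [hB.apply_comm j i, sq]
    · rw [hB.apply_comm l i]
      exact mul_self_nonneg _
  exact (sq_le_one_iff_abs_le_one _).1 (hsq.trans (hdiag.trans (hB.apply_self_le_one i)))

lemma dotProduct_mulVec_nonneg (hB : IsShrinkage q B) (x : κ → ℝ) : 0 ≤ x ⬝ᵥ B *ᵥ x := by
  simpa using hB.posSemidef.dotProduct_mulVec_nonneg x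

lemma dotProduct_mulVec_le (hB : IsShrinkage q B) (x : κ → ℝ) : x ⬝ᵥ B *ᵥ x ≤ x ⬝ᵥ x := by
  simpa [sub_mulVec] using hB.posSemidef_one_sub.dotProduct_mulVec_nonneg x

lemma mono (hB : IsShrinkage q B) {q' : ℝ} (hq : q' ≤ q) : IsShrinkage q' B :=
  ⟨hB.posSemidef, hB.posSemidef_one_sub, hq.trans hB.le_trace⟩

/-- The eigenvalues lie in `[0, 1]`, and the rank counts those that do not vanish. -/
lemma trace_le_rank (hB : IsShrinkage q B) : B.trace ≤ B.rank := by
  have hH := hB.posSemidef.1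
  have hle (i : κ) : hH.eigenvalues i ≤ 1 := by
    have hone : (hH.eigenvectorBasis i).ofLp ⬝ᵥ (hH.eigenvectorBasis i).ofLp = 1 := by
      have hnorm := real_inner_self_eq_norm_sq (hH.eigenvectorBasis i)
      rwa [hH.eigenvectorBasis.orthonormal.1 i, one_pow, EuclideanSpace.inner_eq_star_dotProduct,
        star_trivial] at hnorm
    rw [hH.eigenvalues_eq, ← hone]
    simpa using hB.dotProduct_mulVec_le _
  rw [hH.trace_eq_sum_eigenvalues, hH.rank_eq_card_non_zero_eigs, Fintype.card_subtype,
    Finset.card_filter, Nat.cast_sum]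
  refine Finset.sum_le_sum fun i _ => ?_
  split_ifs with h
  · simpa using hle i
  · simp [not_ne_iff.1 h]

end IsShrinkage

/-- The identity plus a positive semidefinite matrix of rank at most `r`. -/
structure IsSpiked (r : ℕ) (A : Matrix κ κ ℝ) : Prop where
  posSemidef_sub_one : (A - 1).PosSemidef
  rank_sub_one_le : (A - 1).rank ≤ r

lemma isSpiked_one : IsSpiked 0 (1 : Matrix κ κ ℝ) :=
  ⟨by simpa using PosSemidef.zero, by simp⟩

namespace IsSpiked

variable {r : ℕ} {A : Matrix κ κ ℝ}

lemma add_transpose_mul_self (hA : IsSpiked r A) (X : Matrix ι κ ℝ) :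
    IsSpiked (r + Fintype.card ι) (A + Xᵀ * X) := by
  have hsplit : A + Xᵀ * X - 1 = (A - 1) + Xᵀ * X := by abel
  refine ⟨?_, ?_⟩ <;> rw [hsplit]
  · exact hA.posSemidef_sub_one.add
      (by simpa only [conjTranspose_eq_transpose_of_trivial] using
        posSemidef_conjTranspose_mul_self X)
  · refine (rank_add_le_rank_add_rank _ _).trans (add_le_add hA.rank_sub_one_le ?_)
    exact (rank_transpose_mul_self X).trans_le X.rank_le_card_height

lemma add_vecMulVec (hA : IsSpiked r A) (x : κ → ℝ) : IsSpiked (r + 1) (A + vecMulVec x x) := by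
  rw [vecMulVec_eq Unit, ← transpose_replicateRow]
  exact hA.add_transpose_mul_self (replicateRow Unit x)

lemma posDef (hA : IsSpiked r A) : A.PosDef := by
  simpa using PosDef.one.add_posSemidef hA.posSemidef_sub_one

lemma det_pos (hA : IsSpiked r A) : 0 < A.det := hA.posDef.det_pos

/-- `A⁻¹` agrees with the identity up to a matrix of rank at most `r`. -/
lemma isShrinkage_inv (hA : IsSpiked r A) : IsShrinkage (Fintype.card κ - r) A⁻¹ := by
  have hunit : IsUnit A.det := hA.det_pos.ne'.isUnit
  have hdefect : 1 - A⁻¹ = A⁻¹ * (A - 1) := by rw [mul_sub, nonsing_inv_mul A hunit, mul_one]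
  have hone_sub : (1 - A⁻¹).PosSemidef := by
    have hinvH : (A⁻¹)ᴴ = A⁻¹ := hA.posDef.inv.1
    have hsq :=
      (hA.posSemidef_sub_one.add (hA.posSemidef_sub_one.pow 2)).mul_mul_conjTranspose_same A⁻¹
    rw [hinvH] at hsq
    convert hsq using 1
    calc 1 - A⁻¹ = A⁻¹ * (A - 1) * (A * A⁻¹) := by rw [mul_nonsing_inv A hunit, mul_one, hdefect]
      _ = A⁻¹ * ((A - 1) + (A - 1) ^ 2) * A⁻¹ := by noncomm_ring
  have hone_sub' : IsShrinkage 0 (1 - A⁻¹) :=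
    ⟨hone_sub, by simpa using hA.posDef.inv.posSemidef, hone_sub.trace_nonneg⟩
  refine ⟨hA.posDef.inv.posSemidef, hone_sub, ?_⟩
  have hrank : ((1 - A⁻¹).rank : ℝ) ≤ r := by
    rw [hdefect]
    exact_mod_cast (rank_mul_le_right _ _).trans hA.rank_sub_one_le
  have htrace := hone_sub'.trace_le_rank
  rw [trace_sub, trace_one] at htrace
  linarith

lemma det_add_vecMulVec (hA : IsSpiked r A) (x : κ → ℝ) :
    (A + vecMulVec x x).det = A.det * (1 + x ⬝ᵥ A⁻¹ *ᵥ x) := by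
  rw [vecMulVec_eq Unit, det_add_replicateCol_mul_replicateRow hA.det_pos.ne'.isUnit,
    Matrix.mul_assoc, ← replicateCol_mulVec, det_unique (1 + _), Matrix.add_apply, one_apply_eq,
    replicateRow_mul_replicateCol_apply]

lemma det_le_det_add_vecMulVec (hA : IsSpiked r A) (x : κ → ℝ) :
    A.det ≤ (A + vecMulVec x x).det := by
  rw [hA.det_add_vecMulVec]
  exact le_mul_of_one_le_right hA.det_pos.le
    (le_add_of_nonneg_right (hA.isShrinkage_inv.dotProduct_mulVec_nonneg x))

lemma det_add_vecMulVec_le (hA : IsSpiked r A) (x : κ → ℝ) :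
    (A + vecMulVec x x).det ≤ A.det * (1 + x ⬝ᵥ x) := by
  rw [hA.det_add_vecMulVec]
  gcongr
  · exact hA.det_pos.le
  · exact hA.isShrinkage_inv.dotProduct_mulVec_le x

end IsSpiked

end SpikedMatrices

section GaussianQuadraticForms

variable {κ : Type*} [Fintype κ]

lemma memLp_sq_gaussianReal : MemLp (fun x : ℝ => x ^ 2) 2 (gaussianReal 0 1) := by
  refine (memLp_two_iff_integrable_sq (by fun_prop)).2 ?_
  have h := (memLp_id_gaussianReal' (μ := 0) (v := 1) (4 : ℕ) (by simp)).integrable_norm_pow'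
  refine h.congr (ae_of_all _ fun x => ?_)
  simp only [id_eq, Real.norm_eq_abs, (show Even 4 by decide).pow_abs]
  ring

lemma integral_sq_gaussianReal : ∫ x, x ^ 2 ∂(gaussianReal 0 1) = 1 := by
  have h := variance_fun_id_gaussianReal (μ := 0) (v := 1)
  rw [variance_eq_integral (by fun_prop)] at h
  simpa using h

lemma memLp_eval_sq (l : ℝ) (i : κ) :
    MemLp (fun x : κ → ℝ => l * x i ^ 2) 2 (Measure.pi fun _ => gaussianReal 0 1) :=
  (memLp_sq_gaussianReal.comp_measurePreserving
    (measurePreserving_eval (fun _ : κ => gaussianReal 0 1) i)).const_mul l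

section StandardGaussian

variable [DecidableEq κ] {M : Matrix κ κ ℝ}

lemma trace_mul_self_eq_sum_eigenvalues_sq (hM : M.IsHermitian) :
    (M * M).trace = ∑ i, hM.eigenvalues i ^ 2 := by
  conv_lhs => rw [hM.spectral_theorem, ← map_mul, diagonal_mul_diagonal,
    Unitary.conjStarAlgAut_apply, trace_mul_cycle, Unitary.coe_star_mul_self, one_mul,
    trace_diagonal]
  simp [sq]

lemma dotProduct_mulVec_sum_eigenvectorBasis (hM : M.IsHermitian) (x : κ → ℝ) :
    (∑ i, x i • hM.eigenvectorBasis i).ofLp ⬝ᵥ M *ᵥ (∑ i, x i • hM.eigenvectorBasis i).ofLp =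
      ∑ i, hM.eigenvalues i * x i ^ 2 := by
  have himage : M *ᵥ (∑ i, x i • hM.eigenvectorBasis i).ofLp =
      (∑ i, (x i * hM.eigenvalues i) • hM.eigenvectorBasis i).ofLp := by
    simp only [WithLp.ofLp_sum, WithLp.ofLp_smul, mulVec_sum, mulVec_smul,
      hM.mulVec_eigenvectorBasis, smul_smul]
  have hinner := hM.eigenvectorBasis.orthonormal.inner_sum
    (fun i => x i * hM.eigenvalues i) x Finset.univ
  rw [EuclideanSpace.inner_eq_star_dotProduct, star_trivial] at hinner
  rw [himage, hinner]
  exact Finset.sum_congr rfl fun i _ => by simp only [conj_trivial]; ring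

/-- Rotation invariance of the Gaussian law, applied to an eigenbasis of `M`. -/
lemma identDistrib_dotProduct_mulVec_sum_eigenvalues (hM : M.IsHermitian) :
    IdentDistrib (fun x : κ → ℝ => x ⬝ᵥ M *ᵥ x) (fun x => ∑ i, hM.eigenvalues i * x i ^ 2)
      (Measure.pi fun _ => gaussianReal 0 1) (Measure.pi fun _ => gaussianReal 0 1) := by
  have hquad : Measurable fun y : EuclideanSpace ℝ κ => y.ofLp ⬝ᵥ M *ᵥ y.ofLp := by
    simp only [dotProduct, mulVec]
    fun_prop
  refine ⟨by simp only [dotProduct, mulVec]; fun_prop, ?_, ?_⟩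
  · exact Finset.aemeasurable_fun_sum _ fun i _ => (memLp_eval_sq _ i).1.aemeasurable
  have hlaw := congrArg (Measure.map fun y : EuclideanSpace ℝ κ => y.ofLp ⬝ᵥ M *ᵥ y.ofLp)
    ((map_pi_eq_stdGaussian (ι := κ)).trans
      (stdGaussian_eq_map_pi_orthonormalBasis hM.eigenvectorBasis))
  rw [Measure.map_map hquad (by fun_prop), Measure.map_map hquad (by fun_prop)] at hlaw
  simpa only [Function.comp_def, dotProduct_mulVec_sum_eigenvectorBasis hM] using hlaw

omit [DecidableEq κ] in
lemma memLp_dotProduct_mulVec_pi_gaussianReal (hM : M.IsHermitian) :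
    MemLp (fun x : κ → ℝ => x ⬝ᵥ M *ᵥ x) 2 (Measure.pi fun _ => gaussianReal 0 1) := by
  classical
  exact (identDistrib_dotProduct_mulVec_sum_eigenvalues hM).memLp_iff.2
    (memLp_finsetSum _ fun i _ => memLp_eval_sq _ i)

omit [DecidableEq κ] in
lemma integral_dotProduct_mulVec_pi_gaussianReal (hM : M.IsHermitian) :
    ∫ x : κ → ℝ, x ⬝ᵥ M *ᵥ x ∂(Measure.pi fun _ => gaussianReal 0 1) = M.trace := by
  classical
  have hsq (i : κ) : ∫ x : κ → ℝ, x i ^ 2 ∂(Measure.pi fun _ => gaussianReal 0 1) = 1 :=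
    (integral_comp_eval (μ := fun _ : κ => gaussianReal 0 1) (f := fun y : ℝ => y ^ 2)
      (by fun_prop)).trans integral_sq_gaussianReal
  rw [(identDistrib_dotProduct_mulVec_sum_eigenvalues hM).integral_eq,
    integral_finsetSum _ fun i _ => (memLp_eval_sq _ i).integrable one_le_two,
    hM.trace_eq_sum_eigenvalues]
  simp only [integral_const_mul, hsq, mul_one, RCLike.ofReal_real_eq_id, id_eq]

omit [DecidableEq κ] in
lemma variance_dotProduct_mulVec_pi_gaussianReal (hM : M.IsHermitian) :
    Var[fun x : κ → ℝ => x ⬝ᵥ M *ᵥ x; Measure.pi fun _ => gaussianReal 0 1] =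
      Var[fun x => x ^ 2; gaussianReal 0 1] * (M * M).trace := by
  classical
  have hsum := variance_sum_pi (μ := fun _ : κ => gaussianReal 0 1)
    (X := fun i x => hM.eigenvalues i * x ^ 2) fun i => memLp_sq_gaussianReal.const_mul _
  rw [(identDistrib_dotProduct_mulVec_sum_eigenvalues hM).variance_eq,
    trace_mul_self_eq_sum_eigenvalues_sq hM, Finset.mul_sum]
  convert hsum using 2 with i
  · ext x
    simp
  · rw [variance_const_mul, mul_comm]

end StandardGaussian

open scoped NNReal

/-- The law of a row of independent centred Gaussians with variances `v j`. -/
noncomputable def gaussianRow (v : κ → ℝ≥0) : Measure (κ → ℝ) :=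
  Measure.pi fun j => gaussianReal 0 (v j)

instance (v : κ → ℝ≥0) : IsProbabilityMeasure (gaussianRow v) := by
  unfold gaussianRow
  infer_instance

lemma measurePreserving_sqrt_mul (v : κ → ℝ≥0) :
    MeasurePreserving (fun (x : κ → ℝ) j => √(v j : ℝ) * x j)
      (Measure.pi fun _ => gaussianReal 0 1) (gaussianRow v) := by
  refine measurePreserving_pi _ _ fun j => ⟨by fun_prop, ?_⟩
  rw [gaussianReal_map_const_mul, mul_zero, mul_one]
  congr 1
  exact NNReal.eq (Real.sq_sqrt (v j).2)

variable [DecidableEq κ] {B : Matrix κ κ ℝ} (v : κ → ℝ≥0)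

lemma dotProduct_mulVec_sqrt_mul (x : κ → ℝ) :
    (fun j => √(v j : ℝ) * x j) ⬝ᵥ B *ᵥ (fun j => √(v j : ℝ) * x j) =
      x ⬝ᵥ (diagonal (fun j => √(v j : ℝ)) * B * diagonal (fun j => √(v j : ℝ))) *ᵥ x := by
  have hscale : (fun j => √(v j : ℝ) * x j) = diagonal (fun j => √(v j : ℝ)) *ᵥ x := by
    ext j
    rw [mulVec_diagonal]
  rw [hscale, ← mulVec_mulVec, ← mulVec_mulVec, dotProduct_mulVec x, ← mulVec_transpose,
    diagonal_transpose]

lemma isHermitian_diagonal_mul_mul_diagonal (hB : B.IsHermitian) (s : κ → ℝ) :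
    (diagonal s * B * diagonal s).IsHermitian := by
  simpa using isHermitian_mul_mul_conjTranspose (diagonal s) hB

omit [DecidableEq κ] in
lemma memLp_dotProduct_mulVec_gaussianRow (hB : B.IsHermitian) :
    MemLp (fun x => x ⬝ᵥ B *ᵥ x) 2 (gaussianRow v) := by
  classical
  have h := memLp_dotProduct_mulVec_pi_gaussianReal
    (isHermitian_diagonal_mul_mul_diagonal hB fun j => √(v j : ℝ))
  simp only [← dotProduct_mulVec_sqrt_mul] at h
  rw [← (measurePreserving_sqrt_mul v).map_eq]
  exact (memLp_map_measure_iff (by simp only [dotProduct, mulVec]; fun_prop)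
    (measurePreserving_sqrt_mul v).aemeasurable).2 h

omit [DecidableEq κ] in
lemma integral_dotProduct_mulVec_gaussianRow (hB : B.IsHermitian) :
    ∫ x, x ⬝ᵥ B *ᵥ x ∂(gaussianRow v) = ∑ j, v j * B j j := by
  classical
  rw [← (measurePreserving_sqrt_mul v).map_eq, integral_map
    (measurePreserving_sqrt_mul v).aemeasurable (by simp only [dotProduct, mulVec]; fun_prop)]
  simp only [dotProduct_mulVec_sqrt_mul, integral_dotProduct_mulVec_pi_gaussianReal
    (isHermitian_diagonal_mul_mul_diagonal hB fun j => √(v j : ℝ))]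
  refine Finset.sum_congr rfl fun j _ => ?_
  rw [diag_apply, mul_diagonal, diagonal_mul, mul_right_comm]
  exact congrArg (· * B j j) (Real.mul_self_sqrt (v j).2)

lemma trace_mul_self_diagonal_mul_mul_diagonal_le (hB : B.IsHermitian) {s : κ → ℝ} {β : ℝ}
    (hs : ∀ j, s j ^ 2 ≤ β) :
    ((diagonal s * B * diagonal s) * (diagonal s * B * diagonal s)).trace ≤
      β ^ 2 * (B * B).trace := by
  simp only [trace, diag_apply, mul_apply (M := B), mul_apply (M := diagonal s * B * diagonal s),
    mul_diagonal, diagonal_mul, Finset.mul_sum]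
  refine Finset.sum_le_sum fun i _ => Finset.sum_le_sum fun j _ => ?_
  have hsymm : B j i = B i j := by simpa using hB.apply i j
  calc s i * B i j * s j * (s j * B j i * s i) = s i ^ 2 * s j ^ 2 * (B i j * B j i) := by ring
    _ ≤ β * β * (B i j * B j i) := by
        have hβ : 0 ≤ β := (sq_nonneg _).trans (hs i)
        rw [hsymm]
        gcongr
        · exact mul_self_nonneg _
        · exact hs i
        · exact hs j
    _ = β ^ 2 * (B i j * B j i) := by rw [sq]

omit [DecidableEq κ] in
lemma variance_dotProduct_mulVec_gaussianRow_le (hB : B.IsHermitian) {β : ℝ}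
    (hv : ∀ j, v j ≤ β) :
    Var[fun x => x ⬝ᵥ B *ᵥ x; gaussianRow v] ≤
      Var[fun x => x ^ 2; gaussianReal 0 1] * (β ^ 2 * (B * B).trace) := by
  classical
  rw [← (measurePreserving_sqrt_mul v).map_eq, variance_map
    (by simp only [dotProduct, mulVec]; fun_prop) (measurePreserving_sqrt_mul v).aemeasurable]
  simp only [Function.comp_def, dotProduct_mulVec_sqrt_mul,
    variance_dotProduct_mulVec_pi_gaussianReal
      (isHermitian_diagonal_mul_mul_diagonal hB fun j => √(v j : ℝ))]
  exact mul_le_mul_of_nonneg_left (trace_mul_self_diagonal_mul_mul_diagonal_le hB fun j =>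
    (Real.sq_sqrt (v j).2).trans_le (hv j)) (variance_nonneg _ _)

end GaussianQuadraticForms

section OneRow

open scoped NNReal

variable {κ : Type*} [Fintype κ]

section Average

variable {Ω : Type*} [MeasurableSpace Ω] {ρ : Measure Ω} {q : ℝ} {d : Ω → ℝ}
  {B : Ω → Matrix κ κ ℝ}

lemma integral_mul_dotProduct_mulVec (hdB : ∀ i j, Integrable (fun ω => d ω * B ω i j) ρ)
    (x : κ → ℝ) :
    Integrable (fun ω => d ω * (x ⬝ᵥ B ω *ᵥ x)) ρ ∧
      ∫ ω, d ω * (x ⬝ᵥ B ω *ᵥ x) ∂ρ = x ⬝ᵥ (of fun i j => ∫ ω, d ω * B ω i j ∂ρ) *ᵥ x := by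
  have hexpand (ω : Ω) : d ω * (x ⬝ᵥ B ω *ᵥ x) =
      ∑ i, ∑ j, x i * x j * (d ω * B ω i j) := by
    simp only [dotProduct, mulVec, Finset.mul_sum]
    exact Finset.sum_congr rfl fun i _ => Finset.sum_congr rfl fun j _ => by ring
  have hterm (i j : κ) : Integrable (fun ω => x i * x j * (d ω * B ω i j)) ρ :=
    (hdB i j).const_mul _
  have hrow (i : κ) : Integrable (fun ω => ∑ j, x i * x j * (d ω * B ω i j)) ρ :=
    integrable_finsetSum _ fun j _ => hterm i j
  simp only [hexpand]
  refine ⟨integrable_finsetSum _ fun i _ => hrow i, ?_⟩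
  simp only [integral_finsetSum _ fun i _ => hrow i, integral_finsetSum _ fun j _ => hterm _ j,
    integral_const_mul, dotProduct, mulVec, of_apply, Finset.mul_sum]
  exact Finset.sum_congr rfl fun i _ => Finset.sum_congr rfl fun j _ => by ring

variable [DecidableEq κ]

lemma integrable_mul_isShrinkage_apply (hd : Integrable d ρ)
    (hBm : ∀ i j, Measurable fun ω => B ω i j) (hB : ∀ ω, IsShrinkage q (B ω)) (i j : κ) :
    Integrable (fun ω => d ω * B ω i j) ρ :=
  hd.mul_bdd (c := 1) (hBm i j).aestronglyMeasurable
    (ae_of_all _ fun ω => (hB ω).abs_apply_le_one i j)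

lemma exists_isShrinkage_average (hd : Integrable d ρ) (hd0 : ∀ ω, 0 ≤ d ω)
    (hdpos : 0 < ∫ ω, d ω ∂ρ) (hBm : ∀ i j, Measurable fun ω => B ω i j)
    (hB : ∀ ω, IsShrinkage q (B ω)) :
    ∃ C, IsShrinkage q C ∧ ∀ x : κ → ℝ,
      ∫ ω, d ω * (1 + x ⬝ᵥ B ω *ᵥ x) ∂ρ = (∫ ω, d ω ∂ρ) * (1 + x ⬝ᵥ C *ᵥ x) := by
  set D := ∫ ω, d ω ∂ρ with hD
  have hdB := integrable_mul_isShrinkage_apply hd hBm hB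
  set S : Matrix κ κ ℝ := of fun i j => ∫ ω, d ω * B ω i j ∂ρ with hS
  have hquad (x : κ → ℝ) : x ⬝ᵥ (D⁻¹ • S) *ᵥ x = D⁻¹ * ∫ ω, d ω * (x ⬝ᵥ B ω *ᵥ x) ∂ρ := by
    rw [(integral_mul_dotProduct_mulVec hdB x).2, smul_mulVec, dotProduct_smul, smul_eq_mul]
  have hsymm : (D⁻¹ • S).IsHermitian := by
    ext i j
    simp [hS, (hB _).apply_comm i j]
  refine ⟨D⁻¹ • S, ⟨.of_dotProduct_mulVec_nonneg hsymm fun x => ?_,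
    .of_dotProduct_mulVec_nonneg (isHermitian_one.sub hsymm) fun x => ?_, ?_⟩, fun x => ?_⟩
  · rw [star_trivial, hquad]
    exact mul_nonneg (inv_nonneg.2 hdpos.le) (integral_nonneg fun ω =>
      mul_nonneg (hd0 ω) ((hB ω).dotProduct_mulVec_nonneg x))
  · rw [star_trivial, sub_mulVec, one_mulVec, dotProduct_sub, hquad, sub_nonneg,
      inv_mul_le_iff₀ hdpos, hD, ← integral_mul_const]
    exact integral_mono (integral_mul_dotProduct_mulVec hdB x).1 (hd.mul_const _) fun ω =>
      mul_le_mul_of_nonneg_left ((hB ω).dotProduct_mulVec_le x) (hd0 ω)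
  · have htrace : S.trace = ∫ ω, d ω * (B ω).trace ∂ρ := by
      simp only [trace, diag_apply, Finset.mul_sum, hS, of_apply]
      exact (integral_finsetSum _ fun i _ => hdB i i).symm
    have hint : Integrable (fun ω => d ω * (B ω).trace) ρ := by
      simp only [trace, diag_apply, Finset.mul_sum]
      exact integrable_finsetSum _ fun i _ => hdB i i
    rw [trace_smul, smul_eq_mul, htrace, le_inv_mul_iff₀ hdpos, hD, ← integral_mul_const]
    exact integral_mono (hd.mul_const _) hint fun ω =>
      mul_le_mul_of_nonneg_left (hB ω).le_trace (hd0 ω)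
  · simp only [mul_add, mul_one]
    rw [integral_add hd (integral_mul_dotProduct_mulVec hdB x).1, hquad,
      mul_inv_cancel_left₀ hdpos.ne']

end Average

lemma log_one_add_mul_natCast_nonneg {β : ℝ} (hβ : 0 ≤ β) (n : ℕ) : 0 ≤ Real.log (1 + β * n) :=
  Real.log_nonneg (le_add_of_nonneg_right (mul_nonneg hβ n.cast_nonneg))

/-- Bound for the Jensen gap of `1 + xᵀ B x`, where `x` has `n` independent centred Gaussian
entries with variances in `[α, β]` and `B` is a shrinkage of trace at least `q`. -/
noncomputable def rowLoss (α β : ℝ) (n : ℕ) (q : ℝ) : ℝ :=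
  (2 + 4 * Real.log (1 + β * n)) *
    (Var[fun x => x ^ 2; gaussianReal 0 1] * β ^ 2 / (α ^ 2 * q))

variable [DecidableEq κ] {v : κ → ℝ≥0} {α β q : ℝ} {B : Matrix κ κ ℝ}

lemma IsShrinkage.integral_dotProduct_mulVec_mem_Icc (hB : IsShrinkage q B)
    (hv : ∀ j, (v j : ℝ) ∈ Set.Icc α β) :
    ∫ x, x ⬝ᵥ B *ᵥ x ∂(gaussianRow v) ∈ Set.Icc (α * B.trace) (β * Fintype.card κ) := by
  rw [integral_dotProduct_mulVec_gaussianRow v hB.posSemidef.1, trace, Finset.mul_sum]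
  constructor
  · exact Finset.sum_le_sum fun j _ =>
      mul_le_mul_of_nonneg_right (hv j).1 (hB.apply_self_nonneg j)
  · rw [mul_comm, ← nsmul_eq_mul, Fintype.card, ← Finset.sum_const]
    refine Finset.sum_le_sum fun j _ => ?_
    exact (mul_le_of_le_one_right (v j).2 (hB.apply_self_le_one j)).trans (hv j).2

omit [DecidableEq κ] in
lemma memLp_one_add_dotProduct_mulVec_gaussianRow (v : κ → ℝ≥0) (hB : B.IsHermitian) :
    MemLp (fun x => 1 + x ⬝ᵥ B *ᵥ x) 2 (gaussianRow v) :=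
  (memLp_const (1 : ℝ)).add (memLp_dotProduct_mulVec_gaussianRow v hB)

omit [DecidableEq κ] in
lemma integral_one_add_dotProduct_mulVec_gaussianRow (v : κ → ℝ≥0) (hB : B.IsHermitian) :
    ∫ x, (1 + x ⬝ᵥ B *ᵥ x) ∂(gaussianRow v) = 1 + ∫ x, x ⬝ᵥ B *ᵥ x ∂(gaussianRow v) := by
  rw [integral_add (integrable_const 1)
    ((memLp_dotProduct_mulVec_gaussianRow v hB).integrable one_le_two), integral_const,
    probReal_univ, one_smul]

lemma IsShrinkage.variance_one_add_dotProduct_mulVec_div_le (hB : IsShrinkage q B) (hq : 0 < q)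
    (hα : 0 < α) (hv : ∀ j, (v j : ℝ) ∈ Set.Icc α β) :
    Var[fun x => 1 + x ⬝ᵥ B *ᵥ x; gaussianRow v] /
        (∫ x, (1 + x ⬝ᵥ B *ᵥ x) ∂(gaussianRow v)) ^ 2 ≤
      Var[fun x => x ^ 2; gaussianReal 0 1] * β ^ 2 / (α ^ 2 * q) := by
  set V := Var[fun x => x ^ 2; gaussianReal 0 1]
  have hV : 0 ≤ V := variance_nonneg _ _
  have htrace : 0 < B.trace := hq.trans_le hB.le_trace
  have hvar : Var[fun x => 1 + x ⬝ᵥ B *ᵥ x; gaussianRow v] ≤ V * β ^ 2 * B.trace := by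
    rw [variance_const_add
      (memLp_dotProduct_mulVec_gaussianRow v hB.posSemidef.1).aestronglyMeasurable]
    exact (variance_dotProduct_mulVec_gaussianRow_le v hB.posSemidef.1 fun j => (hv j).2).trans
      (by rw [mul_assoc]; gcongr; exact hB.trace_mul_self_le)
  have hmean : α * B.trace ≤ ∫ x, (1 + x ⬝ᵥ B *ᵥ x) ∂(gaussianRow v) := by
    rw [integral_one_add_dotProduct_mulVec_gaussianRow v hB.posSemidef.1]
    linarith [(hB.integral_dotProduct_mulVec_mem_Icc hv).1]
  calc _ ≤ V * β ^ 2 * B.trace / (α * B.trace) ^ 2 := by gcongr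
    _ = V * β ^ 2 / (α ^ 2 * B.trace) := by field_simp
    _ ≤ _ := by gcongr; exact hB.le_trace

lemma IsShrinkage.logJensenGap_one_add_dotProduct_mulVec_le (hB : IsShrinkage q B) (hq : 0 < q)
    (hα : 0 < α) (hv : ∀ j, (v j : ℝ) ∈ Set.Icc α β) :
    logJensenGap (gaussianRow v) (fun x => 1 + x ⬝ᵥ B *ᵥ x) ≤ rowLoss α β (Fintype.card κ) q := by
  obtain ⟨hlower, hupper⟩ := hB.integral_dotProduct_mulVec_mem_Icc hv
  have hmean := integral_one_add_dotProduct_mulVec_gaussianRow v hB.posSemidef.1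
  have htrace : 0 < α * B.trace := mul_pos hα (hq.trans_le hB.le_trace)
  have hlog : 0 ≤ Real.log (1 + β * Fintype.card κ) := Real.log_nonneg (by linarith)
  refine (logJensenGap_le_variance
    (memLp_one_add_dotProduct_mulVec_gaussianRow v hB.posSemidef.1) one_pos
    (fun x => le_add_of_nonneg_right (hB.dotProduct_mulVec_nonneg x))
    (l := Real.log (1 + β * Fintype.card κ)) ?_).trans ?_
  · rw [div_one, hmean]
    exact Real.log_le_log (by linarith) (by linarith)
  · exact mul_le_mul_of_nonneg_left (hB.variance_one_add_dotProduct_mulVec_div_le hq hα hv)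
      (by positivity)

lemma logJensenGap_integral_det_add_vecMulVec_le {Ω : Type*} [MeasurableSpace Ω] {ρ : Measure Ω}
    [IsProbabilityMeasure ρ] {r : ℕ} {A : Ω → Matrix κ κ ℝ} {c : ℝ} (hA : ∀ ω, IsSpiked r (A ω))
    (hAinv : ∀ i j, Measurable fun ω => (A ω)⁻¹ i j) (hdet : Integrable (fun ω => (A ω).det) ρ)
    (hc : 0 < c) (hcA : ∀ ω, c ≤ (A ω).det) (hα : 0 < α) (hv : ∀ j, (v j : ℝ) ∈ Set.Icc α β)
    (hq : 0 < q) (hqr : q ≤ Fintype.card κ - r) :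
    logJensenGap (gaussianRow v) (fun x => ∫ ω, (A ω + vecMulVec x x).det ∂ρ) ≤
      rowLoss α β (Fintype.card κ) q := by
  have hmean : 0 < ∫ ω, (A ω).det ∂ρ := hc.trans_le (le_integral_of_ae_le hdet (ae_of_all _ hcA))
  obtain ⟨B, hB, hquad⟩ := exists_isShrinkage_average hdet (fun ω => (hA ω).det_pos.le) hmean hAinv
    fun ω => (hA ω).isShrinkage_inv.mono hqr
  simp only [(hA _).det_add_vecMulVec, hquad]
  rw [logJensenGap_const_mul hmean
    ((memLp_one_add_dotProduct_mulVec_gaussianRow v hB.posSemidef.1).integrable one_le_two) one_pos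
    fun x => le_add_of_nonneg_right (hB.dotProduct_mulVec_nonneg x)]
  exact hB.logJensenGap_one_add_dotProduct_mulVec_le hq hα hv

end OneRow

section IndependentRows

open scoped NNReal

variable {κ : Type*}

lemma transpose_mul_self_vecCons {k : ℕ} (x : κ → ℝ) (y : Fin k → κ → ℝ) :
    (of (vecCons x y))ᵀ * of (vecCons x y) = vecMulVec x x + (of y)ᵀ * of y := by
  ext i j
  simp [mul_apply, Fin.sum_univ_succ, vecMulVec_apply]

lemma continuous_add_transpose_mul_self {k : ℕ} (A : Matrix κ κ ℝ) :
    Continuous fun y : Fin k → κ → ℝ => A + (of y)ᵀ * of y :=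
  continuous_const.add (Continuous.matrix_mul continuous_id.matrix_transpose continuous_id)

variable [Fintype κ]

/-- The law of the rows of a random matrix with independent centred Gaussian entries of variances
`v i j`. -/
noncomputable def gaussianMatrix {k : ℕ} (v : Fin k → κ → ℝ≥0) : Measure (Fin k → κ → ℝ) :=
  Measure.pi fun i => gaussianRow (v i)

instance {k : ℕ} (v : Fin k → κ → ℝ≥0) : IsProbabilityMeasure (gaussianMatrix v) := by
  unfold gaussianMatrix
  infer_instance

lemma measurePreserving_vecCons_gaussianMatrix {k : ℕ} (v : Fin (k + 1) → κ → ℝ≥0) :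
    MeasurePreserving (fun p : (κ → ℝ) × (Fin k → κ → ℝ) => vecCons p.1 p.2)
      ((gaussianRow (v 0)).prod (gaussianMatrix (vecTail v))) (gaussianMatrix v) := by
  convert (measurePreserving_piFinSuccAbove (fun i => gaussianRow (v i)) 0).symm using 2
  · exact (Fin.insertNth_zero' _ _).symm
  all_goals rfl

lemma integrable_prod_one_add_dotProduct_self {k : ℕ} (v : Fin k → κ → ℝ≥0) :
    Integrable (fun y => ∏ i, (1 + y i ⬝ᵥ y i)) (gaussianMatrix v) := by
  classical
  have hrow (i : Fin k) : Integrable (fun x => 1 + x ⬝ᵥ x) (gaussianRow (v i)) := by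
    simpa only [one_mulVec] using
      (memLp_one_add_dotProduct_mulVec_gaussianRow (v i) isHermitian_one).integrable one_le_two
  exact Integrable.fintype_prod hrow

variable [DecidableEq κ] {k r : ℕ} {A : Matrix κ κ ℝ}

lemma measurable_inv_apply {X : Type*} [TopologicalSpace X] [MeasurableSpace X]
    [OpensMeasurableSpace X] {M : X → Matrix κ κ ℝ} (hM : Continuous M) (i j : κ) :
    Measurable fun x => (M x)⁻¹ i j := by
  simp only [inv_def, Ring.inverse_eq_inv', Matrix.smul_apply, smul_eq_mul]
  exact hM.matrix_det.measurable.inv.mul (hM.matrix_adjugate.matrix_elem i j).measurable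

lemma IsSpiked.det_le_det_add_transpose_mul_self (hA : IsSpiked r A) (y : Fin k → κ → ℝ) :
    A.det ≤ (A + (of y)ᵀ * of y).det := by
  induction k generalizing r A with
  | zero => simp
  | succ k ih =>
    rw [← cons_head_tail y, transpose_mul_self_vecCons, ← add_assoc]
    exact (hA.det_le_det_add_vecMulVec _).trans (ih (hA.add_vecMulVec _) _)

lemma IsSpiked.det_add_transpose_mul_self_le (hA : IsSpiked r A) (y : Fin k → κ → ℝ) :
    (A + (of y)ᵀ * of y).det ≤ A.det * ∏ i, (1 + y i ⬝ᵥ y i) := by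
  induction k generalizing r A with
  | zero => simp
  | succ k ih =>
    rw [← cons_head_tail y, transpose_mul_self_vecCons, ← add_assoc, Fin.prod_univ_succ,
      ← mul_assoc]
    refine (ih (hA.add_vecMulVec _) _).trans (mul_le_mul_of_nonneg_right
      (hA.det_add_vecMulVec_le _) (Finset.prod_nonneg fun i _ => ?_))
    exact add_nonneg zero_le_one (dotProduct_star_self_nonneg _)

lemma IsSpiked.integrable_det_add_transpose_mul_self (hA : IsSpiked r A)
    (v : Fin k → κ → ℝ≥0) :
    Integrable (fun y => (A + (of y)ᵀ * of y).det) (gaussianMatrix v) :=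
  ((integrable_prod_one_add_dotProduct_self v).const_mul A.det).mono'
    (continuous_add_transpose_mul_self A).matrix_det.aestronglyMeasurable <| ae_of_all _ fun y => by
    rw [Real.norm_of_nonneg (hA.det_pos.le.trans (hA.det_le_det_add_transpose_mul_self y))]
    exact hA.det_add_transpose_mul_self_le y

variable {v : Fin k → κ → ℝ≥0} {α β q : ℝ}

lemma rowLoss_nonneg (hβ : 0 ≤ β) (n : ℕ) (hq : 0 ≤ q) : 0 ≤ rowLoss α β n q := by
  have hlog := log_one_add_mul_natCast_nonneg hβ n
  have hV := variance_nonneg (fun x : ℝ => x ^ 2) (gaussianReal 0 1)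
  unfold rowLoss
  positivity

lemma logJensenGap_det_add_transpose_mul_self_le_mul (hA : IsSpiked r A) (hα : 0 < α)
    (hv : ∀ i j, (v i j : ℝ) ∈ Set.Icc α β) (hq : 0 < q) (hqr : q + r + k ≤ Fintype.card κ + 1) :
    logJensenGap (gaussianMatrix v) (fun y => (A + (of y)ᵀ * of y).det) ≤
      k * rowLoss α β (Fintype.card κ) q := by
  induction k generalizing r A with
  | zero => simp [logJensenGap]
  | succ k ih =>
    push_cast at hqr ⊢
    have hX := hA.integrable_det_add_transpose_mul_self v
    have hcons := measurePreserving_vecCons_gaussianMatrix v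
    rw [← logJensenGap_comp hcons hX.aestronglyMeasurable, add_one_mul, add_comm (k * _ : ℝ)]
    refine logJensenGap_prod_le (hcons.integrable_comp_of_integrable hX) hA.det_pos
      (fun p => hA.det_le_det_add_transpose_mul_self (vecCons p.1 p.2)) ?_ fun x => ?_
    · have hspiked (y : Fin k → κ → ℝ) : IsSpiked (r + k) (A + (of y)ᵀ * of y) := by
        simpa only [Fintype.card_fin] using hA.add_transpose_mul_self (of y)
      simp only [transpose_mul_self_vecCons, add_comm (vecMulVec _ _), ← add_assoc]
      exact logJensenGap_integral_det_add_vecMulVec_le hspiked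
        (measurable_inv_apply (continuous_add_transpose_mul_self A))
        (hA.integrable_det_add_transpose_mul_self _) hA.det_pos
        hA.det_le_det_add_transpose_mul_self hα (hv 0) hq (by push_cast; linarith)
    · simp only [transpose_mul_self_vecCons, ← add_assoc]
      exact ih (hA.add_vecMulVec x) (fun i => hv i.succ) (by push_cast; linarith)

lemma logJensenGap_det_add_transpose_mul_self_succ_le (hA : IsSpiked r A) (hβ : 0 ≤ β)
    {v : Fin (k + 1) → κ → ℝ≥0} (hv : ∀ j, (v 0 j : ℝ) ∈ Set.Icc α β) :
    logJensenGap (gaussianMatrix v) (fun y => (A + (of y)ᵀ * of y).det) ≤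
      logJensenGap (gaussianMatrix (vecTail v)) (fun y => (A + (of y)ᵀ * of y).det) +
        Real.log (1 + β * Fintype.card κ) := by
  have hX := hA.integrable_det_add_transpose_mul_self v
  have hcons := measurePreserving_vecCons_gaussianMatrix v
  have hspiked (y : Fin k → κ → ℝ) := hA.add_transpose_mul_self (of y)
  have hXint := hcons.integrable_comp_of_integrable hX
  rw [← logJensenGap_comp hcons hX.aestronglyMeasurable]
  simp only [Function.comp_def, transpose_mul_self_vecCons, add_comm (vecMulVec _ _),
    ← add_assoc] at hXint ⊢
  refine logJensenGap_prod_le_add_log hXint (hA.integrable_det_add_transpose_mul_self _)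
    hA.det_pos hA.det_le_det_add_transpose_mul_self
    (fun x y => (hspiked y).det_le_det_add_vecMulVec x) (by positivity) fun y => ?_
  have hB := (hspiked y).isShrinkage_inv
  simp only [(hspiked y).det_add_vecMulVec, integral_const_mul, mul_comm (1 + β * _)]
  refine mul_le_mul_of_nonneg_left ?_ (hspiked y).det_pos.le
  rw [integral_one_add_dotProduct_mulVec_gaussianRow _ hB.posSemidef.1]
  linarith [(hB.integral_dotProduct_mulVec_mem_Icc hv).2]

/-- While fewer than `q` directions are left free by the rows, each further row is only charged
the crude factor `1 + β n`. -/
lemma logJensenGap_det_add_transpose_mul_self_le (hA : IsSpiked r A) (hα : 0 < α) (hβ : 0 ≤ β)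
    (hv : ∀ i j, (v i j : ℝ) ∈ Set.Icc α β) (hq : 0 < q) (s : ℕ)
    (hqs : q + r + k ≤ Fintype.card κ + 1 + s) :
    logJensenGap (gaussianMatrix v) (fun y => (A + (of y)ᵀ * of y).det) ≤
      k * rowLoss α β (Fintype.card κ) q + s * Real.log (1 + β * Fintype.card κ) := by
  have hlog := log_one_add_mul_natCast_nonneg hβ (Fintype.card κ)
  induction s generalizing k with
  | zero =>
    simpa using logJensenGap_det_add_transpose_mul_self_le_mul hA hα hv hq (by simpa using hqs)
  | succ s ih =>
    cases k with
    | zero =>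
      have hgap : logJensenGap (gaussianMatrix v) (fun y => (A + (of y)ᵀ * of y).det) = 0 := by
        simp [logJensenGap]
      rw [hgap, Nat.cast_zero, zero_mul, zero_add]
      positivity
    | succ k =>
      push_cast at hqs ⊢
      linarith [logJensenGap_det_add_transpose_mul_self_succ_le hA hβ (hv 0),
        ih (v := vecTail v) (fun i => hv i.succ) (by linarith),
        rowLoss_nonneg hβ (Fintype.card κ) hq.le (α := α)]

end IndependentRows

section Matchings

open scoped Finset

variable {ι : Type*} [LinearOrder ι]

/-- A set of pairwise disjoint pairs, each listed in increasing order: a matching of the complete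
graph on `ι`, encoded as in `phiW`. -/
def IsMatching (M : Finset (ι × ι)) : Prop :=
  (∀ p ∈ M, p.1 < p.2) ∧
    ∀ p ∈ M, ∀ q ∈ M, p ≠ q → p.1 ≠ q.1 ∧ p.1 ≠ q.2 ∧ p.2 ≠ q.1 ∧ p.2 ≠ q.2

variable [Fintype ι]

/-- The pairs, in increasing order, that `σ` exchanges when it is an involution. -/
def exchangedPairs (σ : Equiv.Perm ι) : Finset (ι × ι) :=
  {p | p.1 < p.2 ∧ σ p.1 = p.2}

variable {σ τ : Equiv.Perm ι}

lemma mem_exchangedPairs {p : ι × ι} : p ∈ exchangedPairs σ ↔ p.1 < p.2 ∧ σ p.1 = p.2 := by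
  simp [exchangedPairs]

lemma isMatching_exchangedPairs (hσ : Function.Involutive σ) : IsMatching (exchangedPairs σ) := by
  simp only [IsMatching, mem_exchangedPairs]
  refine ⟨fun p hp => hp.1, fun p ⟨hp, hσp⟩ q ⟨hq, hσq⟩ hpq => ⟨?_, ?_, ?_, ?_⟩⟩ <;> intro h
  · exact hpq (Prod.ext h (by rw [← hσp, ← hσq, h]))
  · rw [h, ← hσq, hσ] at hσp
    exact absurd (hp.trans_eq hσp.symm) (by rw [h]; exact hq.not_gt)
  · rw [← h, ← hσp, hσ] at hσq
    exact absurd (hq.trans_eq hσq.symm) (by rw [← h]; exact hp.not_gt)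
  · exact hpq (Prod.ext (σ.injective (by rw [hσp, hσq, h])) h)

lemma apply_eq_of_exchangedPairs_subset (hσ : Function.Involutive σ) (hτ : Function.Involutive τ)
    (h : exchangedPairs σ ⊆ exchangedPairs τ) {i : ι} (hi : σ i ≠ i) : τ i = σ i := by
  rcases hi.lt_or_gt with hlt | hgt
  · have hmem : (σ i, i) ∈ exchangedPairs σ := mem_exchangedPairs.2 ⟨hlt, hσ i⟩
    exact (hτ.eq_iff.1 (mem_exchangedPairs.1 (h hmem)).2).symm
  · have hmem : (i, σ i) ∈ exchangedPairs σ := mem_exchangedPairs.2 ⟨hgt, rfl⟩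
    exact (mem_exchangedPairs.1 (h hmem)).2

lemma exchangedPairs_injOn :
    Set.InjOn (exchangedPairs (ι := ι)) {σ : Equiv.Perm ι | Function.Involutive σ} := by
  intro σ hσ τ hτ h
  ext i
  by_cases hi : σ i = i
  · by_cases hi' : τ i = i
    · rw [hi, hi']
    · exact apply_eq_of_exchangedPairs_subset hτ hσ h.superset hi'
  · exact (apply_eq_of_exchangedPairs_subset hσ hτ h.subset hi).symm

lemma IsMatching.exists_involutive {M : Finset (ι × ι)} (hM : IsMatching M) :
    ∃ σ : Equiv.Perm ι, Function.Involutive σ ∧ exchangedPairs σ = M := by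
  classical
  have hunique {i j j' : ι} (hj : (i, j) ∈ M ∨ (j, i) ∈ M) (hj' : (i, j') ∈ M ∨ (j', i) ∈ M) :
      j = j' := by
    by_contra hne
    rcases hj with hj | hj <;> rcases hj' with hj' | hj' <;>
      have hdisj := hM.2 _ hj _ hj' <;> simp_all
  set f : ι → ι := fun i => if h : ∃ j, (i, j) ∈ M ∨ (j, i) ∈ M then h.choose else i with hf
  have hf_eq {i j : ι} (hj : (i, j) ∈ M ∨ (j, i) ∈ M) : f i = j := by
    have h : ∃ j, (i, j) ∈ M ∨ (j, i) ∈ M := ⟨j, hj⟩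
    simp only [hf, dif_pos h]
    exact hunique h.choose_spec hj
  have hf_mem {i : ι} (hi : f i ≠ i) : (i, f i) ∈ M ∨ (f i, i) ∈ M := by
    by_cases h : ∃ j, (i, j) ∈ M ∨ (j, i) ∈ M
    · obtain ⟨j, hj⟩ := h
      rwa [hf_eq hj]
    · exact absurd (dif_neg h) hi
  have hinv : Function.Involutive f := fun i => by
    by_cases hi : f i = i
    · rw [hi, hi]
    · exact hf_eq (hf_mem hi).symm
  refine ⟨hinv.toPerm, hinv, Finset.ext fun p => ?_⟩
  rw [mem_exchangedPairs, Function.Involutive.coe_toPerm]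
  refine ⟨fun ⟨hlt, hp⟩ => ?_, fun hp => ⟨hM.1 p hp, hf_eq (Or.inl hp)⟩⟩
  rcases hf_mem (hp.trans_ne hlt.ne') with h | h <;> rw [hp] at h
  · exact h
  · exact absurd (hM.1 _ h) hlt.not_gt

open Classical in
lemma sum_involutive_eq_sum_isMatching {R : Type*} [AddCommMonoid R] (F : Finset (ι × ι) → R) :
    ∑ σ ∈ {σ : Equiv.Perm ι | Function.Involutive σ}, F (exchangedPairs σ) =
      ∑ M ∈ {M : Finset (ι × ι) | IsMatching M}, F M := by
  refine Finset.sum_nbij exchangedPairs ?_ ?_ ?_ fun _ _ => rfl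
  · simpa using fun σ hσ => isMatching_exchangedPairs hσ
  · simpa using exchangedPairs_injOn
  · intro M hM
    obtain ⟨σ, hσ, h⟩ := IsMatching.exists_involutive (by simpa using hM : IsMatching M)
    exact ⟨σ, by simpa using hσ, h⟩

@[to_additive]
lemma prod_eq_prod_fixed_mul_prod_exchangedPairs {R : Type*} [CommMonoid R]
    (hσ : Function.Involutive σ) (f : ι → R) :
    ∏ i, f i = (∏ i with σ i = i, f i) * ∏ p ∈ exchangedPairs σ, f p.1 * f p.2 := by
  have hup : ∏ i with i < σ i, f i = ∏ p ∈ exchangedPairs σ, f p.1 :=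
    Finset.prod_nbij' (fun i => (i, σ i)) Prod.fst (by simp [mem_exchangedPairs])
      (by simp +contextual [mem_exchangedPairs]) (by simp)
      (by simp +contextual [mem_exchangedPairs]) (by simp)
  have hback (i j : ι) : σ j = i ↔ σ i = j := hσ.eq_iff.trans eq_comm
  have hdown : ∏ i with σ i < i, f i = ∏ p ∈ exchangedPairs σ, f p.2 :=
    Finset.prod_nbij' (fun i => (σ i, i)) Prod.snd (by simp [mem_exchangedPairs, hσ _])
      (by simpa [mem_exchangedPairs] using fun i j hij h => by rwa [(hback i j).2 h]) (by simp)
      (by simp +contextual [mem_exchangedPairs, ← hback]) (by simp)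
  rw [Finset.prod_mul_distrib, ← hup, ← hdown,
    ← Finset.prod_filter_mul_prod_filter_not Finset.univ fun i => σ i = i]
  congr 1
  rw [← Finset.prod_filter_mul_prod_filter_not _ fun i => i < σ i, Finset.filter_filter,
    Finset.filter_filter]
  congr 2 <;> ext i <;> simp <;> grind

lemma card_eq_card_fixed_add_two_mul (hσ : Function.Involutive σ) :
    Fintype.card ι = #{i | σ i = i} + 2 * #(exchangedPairs σ) := by
  simpa [mul_two, mul_comm] using sum_eq_sum_fixed_add_sum_exchangedPairs hσ fun _ => (1 : ℕ)

lemma sign_eq_neg_one_pow_card_exchangedPairs (hσ : Function.Involutive σ) :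
    Equiv.Perm.sign σ = (-1) ^ #(exchangedPairs σ) := by
  have hfixed : Fintype.card (Function.fixedPoints σ) = #{i | σ i = i} := Fintype.card_subtype _
  rw [Equiv.Perm.sign_of_pow_two_eq_one (Equiv.ext fun i => by simpa [pow_two] using hσ i), hfixed,
    card_eq_card_fixed_add_two_mul hσ, Nat.add_sub_cancel_left, Nat.mul_div_cancel_left _ two_pos]

lemma IsMatching.two_mul_card_le {M : Finset (ι × ι)} (hM : IsMatching M) :
    2 * #M ≤ Fintype.card ι := by
  obtain ⟨σ, hσ, rfl⟩ := hM.exists_involutive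
  exact (card_eq_card_fixed_add_two_mul hσ).symm ▸ Nat.le_add_left _ _

lemma parity_mul_pow_eq_sqrt_pow {N k : ℕ} {t : ℝ} (ht : 0 ≤ t) (hk : k ≤ N / 2) :
    (if Even N then 1 else √t) * t ^ (N / 2 - k) = √t ^ (N - 2 * k) := by
  have hsq : t ^ (N / 2 - k) = √t ^ (2 * (N / 2 - k)) := by rw [pow_mul, Real.sq_sqrt ht]
  rw [hsq]
  split_ifs with h
  · rw [one_mul]
    congr 1
    have := Nat.two_mul_div_two_of_even h
    omega
  · rw [← pow_succ']
    congr 1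
    have := Nat.two_mul_div_two_add_one_of_odd (Nat.not_even_iff_odd.1 h)
    omega

open Classical in
lemma PhiFull_eq_sum_isMatching {N : ℕ} (A : Matrix (Fin N) (Fin N) ℝ) {t : ℝ} (ht : 0 ≤ t) :
    PhiFull A t = ∑ M ∈ {M : Finset (Fin N × Fin N) | IsMatching M},
      √t ^ (N - 2 * #M) * ∏ p ∈ M, A p.1 p.2 ^ 2 := by
  have hcard {M : Finset (Fin N × Fin N)} (hM : IsMatching M) : #M ≤ N / 2 := by
    have := hM.two_mul_card_le
    rw [Fintype.card_fin] at this
    omega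
  rw [← Finset.sum_fiberwise_of_maps_to (t := Finset.range (N / 2 + 1)) (g := Finset.card)
    fun M hM => Finset.mem_range_succ_iff.2 (hcard (by simpa using hM)), PhiFull, PhiW,
    Finset.mul_sum]
  refine Finset.sum_congr rfl fun k hk => ?_
  rw [mul_left_comm, parity_mul_pow_eq_sqrt_pow ht (Finset.mem_range_succ_iff.1 hk), phiW,
    Finset.sum_mul, Finset.filter_filter]
  refine Finset.sum_congr (by ext M; simp [IsMatching]) fun M hM => ?_
  rw [(Finset.mem_filter.1 hM).2.2, mul_comm]

end Matchings

section GodsilGutman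

open scoped Finset

variable {N : ℕ} (A : Matrix (Fin N) (Fin N) ℝ)

lemma sampleY_apply_of_lt (ξ : PairIdx N → ℝ) {i j : Fin N} (h : i < j) :
    sampleY A ξ i j = A i j * ξ ⟨(i, j), h⟩ :=
  dif_pos h

lemma sampleY_apply_of_gt (ξ : PairIdx N → ℝ) {i j : Fin N} (h : j < i) :
    sampleY A ξ i j = A i j * ξ ⟨(j, i), h⟩ :=
  (dif_neg h.not_gt).trans (dif_pos h)

lemma sampleY_apply_self (ξ : PairIdx N → ℝ) (i : Fin N) : sampleY A ξ i i = 0 := by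
  simp [sampleY]

instance (N : ℕ) : IsProbabilityMeasure (gaussPi N) :=
  Measure.pi.instIsProbabilityMeasure _

lemma memLp_smul_one_add_sampleY_apply (s : ℝ) (i j : Fin N) (p : NNReal) :
    MemLp (fun ξ => (s • (1 : Matrix (Fin N) (Fin N) ℝ) + sampleY A ξ) i j) p (gaussPi N) := by
  have heval (e : PairIdx N) : MemLp (fun ξ : PairIdx N → ℝ => ξ e) p (gaussPi N) :=
    (memLp_id_gaussianReal p).comp_measurePreserving (measurePreserving_eval _ e)
  refine (memLp_const ((s • (1 : Matrix (Fin N) (Fin N) ℝ)) i j)).add ?_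
  rcases lt_trichotomy i j with h | rfl | h
  · simpa only [sampleY_apply_of_lt A _ h] using (heval _).const_mul _
  · simpa only [sampleY_apply_self] using MemLp.zero'
  · simpa only [sampleY_apply_of_gt A _ h] using (heval _).const_mul _

lemma integrable_prod_smul_one_add_sampleY (s : ℝ) (σ : Equiv.Perm (Fin N)) :
    Integrable (fun ξ => ∏ i, (s • (1 : Matrix (Fin N) (Fin N) ℝ) + sampleY A ξ) (σ i) i)
      (gaussPi N) := by
  have hprod := MemLp.prod' (s := Finset.univ) fun i _ =>
    memLp_smul_one_add_sampleY_apply A s (σ i) i N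
  refine memLp_one_iff_integrable.1 (hprod.mono_exponent (ENNReal.one_le_inv.2 ?_))
  simp [ENNReal.mul_inv_le_one]

/-- The reflection of the Gaussian space that changes the sign of the coordinate at `e`. -/
def flipEdge (e : PairIdx N) (ξ : PairIdx N → ℝ) : PairIdx N → ℝ :=
  fun e' => if e' = e then -ξ e' else ξ e'

lemma measurePreserving_flipEdge (e : PairIdx N) :
    MeasurePreserving (flipEdge e) (gaussPi N) (gaussPi N) := by
  refine measurePreserving_pi (f := fun e' (x : ℝ) => if e' = e then -x else x) _ _ fun e' => ?_
  split_ifs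
  · exact ⟨measurable_neg, by rw [gaussianReal_map_neg, neg_zero]⟩
  · exact .id _

lemma smul_one_add_sampleY_flipEdge (s : ℝ) (e : PairIdx N) (ξ : PairIdx N → ℝ) (i j : Fin N) :
    (s • (1 : Matrix (Fin N) (Fin N) ℝ) + sampleY A (flipEdge e ξ)) i j =
      (if (i, j) = e.1 ∨ (j, i) = e.1 then -1 else 1) *
        (s • (1 : Matrix (Fin N) (Fin N) ℝ) + sampleY A ξ) i j := by
  rcases lt_trichotomy i j with h | rfl | h
  · have hne : (j, i) ≠ e.1 := fun h' => h.not_gt (by simpa [← h'] using e.2)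
    simp [sampleY_apply_of_lt A _ h, flipEdge, one_apply_ne h.ne, hne, Subtype.ext_iff]
  · have hne : (i, i) ≠ e.1 := fun h' => (by simpa [← h'] using e.2)
    simp [sampleY_apply_self, hne]
  · have hne : (i, j) ≠ e.1 := fun h' => h.not_gt (by simpa [← h'] using e.2)
    simp [sampleY_apply_of_gt A _ h, flipEdge, one_apply_ne h.ne', hne, Subtype.ext_iff]

/-- An edge `{i, σ i}` with `σ (σ i) ≠ i` contributes its Gaussian to exactly one factor, so that
flipping its sign changes the sign of the product. -/
lemma integral_prod_smul_one_add_sampleY_of_not_involutive (s : ℝ) {σ : Equiv.Perm (Fin N)}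
    (hσ : ¬ Function.Involutive σ) :
    ∫ ξ, ∏ i, (s • (1 : Matrix (Fin N) (Fin N) ℝ) + sampleY A ξ) (σ i) i ∂(gaussPi N) = 0 := by
  obtain ⟨i, hi⟩ := not_forall.1 hσ
  have hσi : σ i ≠ i := fun h => hi (by rw [h, h])
  obtain ⟨e, he⟩ : ∃ e : PairIdx N, e.1 = (i, σ i) ∨ e.1 = (σ i, i) := by
    rcases hσi.lt_or_gt with h | h
    exacts [⟨⟨(σ i, i), h⟩, Or.inr rfl⟩, ⟨⟨(i, σ i), h⟩, Or.inl rfl⟩]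
  have hflip (ξ : PairIdx N → ℝ) :
      ∏ j, (s • (1 : Matrix (Fin N) (Fin N) ℝ) + sampleY A (flipEdge e ξ)) (σ j) j =
        -∏ j, (s • (1 : Matrix (Fin N) (Fin N) ℝ) + sampleY A ξ) (σ j) j := by
    have hiff (j : Fin N) : (σ j, j) = e.1 ∨ (j, σ j) = e.1 ↔ j = i := by
      grind
    simp only [smul_one_add_sampleY_flipEdge, hiff, Finset.prod_mul_distrib, Finset.prod_ite_eq',
      Finset.mem_univ, if_true, neg_one_mul]
  have hT := measurePreserving_flipEdge e
  have hint := integrable_prod_smul_one_add_sampleY A s σ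
  refine self_eq_neg.1 ?_
  conv_lhs => rw [← hT.map_eq]
  rw [integral_map hT.aemeasurable (hT.map_eq.symm ▸ hint.aestronglyMeasurable),
    ← integral_neg]
  simp only [hflip]

lemma integral_prod_mul_sq_pi_gaussianReal {κ : Type*} [Fintype κ] (u : Finset κ) (c : κ → ℝ) :
    ∫ x, ∏ e ∈ u, c e * x e ^ 2 ∂(Measure.pi fun _ : κ => gaussianReal 0 1) = ∏ e ∈ u, c e := by
  classical
  have hfactor (e : κ) : ∫ x, (if e ∈ u then c e * x ^ 2 else 1) ∂(gaussianReal 0 1) =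
      if e ∈ u then c e else 1 := by
    split_ifs
    · rw [integral_const_mul, integral_sq_gaussianReal, mul_one]
    · simp
  calc ∫ x, ∏ e ∈ u, c e * x e ^ 2 ∂(Measure.pi fun _ : κ => gaussianReal 0 1)
      = ∫ x, ∏ e, (if e ∈ u then c e * x e ^ 2 else 1)
          ∂(Measure.pi fun _ : κ => gaussianReal 0 1) := by
        simp only [Finset.prod_ite_mem, Finset.univ_inter]
    _ = ∏ e, (if e ∈ u then c e else 1) := by
        rw [integral_fintype_prod_eq_prod fun e x => if e ∈ u then c e * x ^ 2 else 1]
        simp only [hfactor]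
    _ = ∏ e ∈ u, c e := by simp only [Finset.prod_ite_mem, Finset.univ_inter]

variable {A}

lemma integral_prod_smul_one_add_sampleY_of_involutive (hA : Aᵀ = -A) (s : ℝ)
    {σ : Equiv.Perm (Fin N)} (hσ : Function.Involutive σ) :
    ∫ ξ, ∏ i, (s • (1 : Matrix (Fin N) (Fin N) ℝ) + sampleY A ξ) (σ i) i ∂(gaussPi N) =
      s ^ #{i | σ i = i} * ∏ p ∈ exchangedPairs σ, -A p.1 p.2 ^ 2 := by
  set u : Finset (PairIdx N) := (exchangedPairs σ).subtype _ with hu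
  have hlt : ∀ p ∈ exchangedPairs σ, p.1 < p.2 := fun p hp => (mem_exchangedPairs.1 hp).1
  have hfixed (ξ : PairIdx N → ℝ) :
      ∏ i with σ i = i, (s • (1 : Matrix (Fin N) (Fin N) ℝ) + sampleY A ξ) (σ i) i =
        s ^ #{i | σ i = i} :=
    Finset.prod_eq_pow_card fun i hi => by
      simp [(Finset.mem_filter.1 hi).2, sampleY_apply_self]
  have hpairs (ξ : PairIdx N → ℝ) :
      ∏ p ∈ exchangedPairs σ, (s • (1 : Matrix (Fin N) (Fin N) ℝ) + sampleY A ξ) (σ p.1) p.1 *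
          (s • (1 : Matrix (Fin N) (Fin N) ℝ) + sampleY A ξ) (σ p.2) p.2 =
        ∏ e ∈ u, -A e.1.1 e.1.2 ^ 2 * ξ e ^ 2 := by
    rw [hu, ← Finset.prod_subtype_of_mem _ hlt]
    refine Finset.prod_congr rfl fun e he => ?_
    have hσe : σ e.1.1 = e.1.2 := (mem_exchangedPairs.1 (Finset.mem_subtype.1 he)).2
    have hAe : A e.1.2 e.1.1 = -A e.1.1 e.1.2 := congrFun₂ hA e.1.1 e.1.2
    have hσe' : σ e.1.2 = e.1.1 := (hσ.eq_iff.1 hσe).symm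
    rw [hσe, hσe']
    simp only [Matrix.add_apply, Matrix.smul_apply, one_apply_ne e.2.ne, one_apply_ne e.2.ne',
      smul_zero, zero_add, sampleY_apply_of_lt A ξ e.2, sampleY_apply_of_gt A ξ e.2, hAe]
    ring
  simp only [prod_eq_prod_fixed_mul_prod_exchangedPairs hσ, hfixed, hpairs]
  rw [integral_const_mul, gaussPi, integral_prod_mul_sq_pi_gaussianReal, hu,
    Finset.prod_subtype_of_mem (fun p => -A p.1 p.2 ^ 2) hlt]

lemma integrable_det_smul_one_add_sampleY (A : Matrix (Fin N) (Fin N) ℝ) (s : ℝ) :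
    Integrable (fun ξ => (s • (1 : Matrix (Fin N) (Fin N) ℝ) + sampleY A ξ).det) (gaussPi N) := by
  simp only [det_apply']
  exact integrable_finsetSum _ fun σ _ =>
    (integrable_prod_smul_one_add_sampleY A s σ).const_mul _

theorem integral_det_smul_one_add_sampleY (hA : Aᵀ = -A) {t : ℝ} (ht : 0 ≤ t) :
    ∫ ξ, (√t • (1 : Matrix (Fin N) (Fin N) ℝ) + sampleY A ξ).det ∂(gaussPi N) = PhiFull A t := by
  classical
  have hterm (σ : Equiv.Perm (Fin N)) (hσ : Function.Involutive σ) :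
      (Equiv.Perm.sign σ : ℝ) * (√t ^ #{i | σ i = i} * ∏ p ∈ exchangedPairs σ, -A p.1 p.2 ^ 2) =
        √t ^ (N - 2 * #(exchangedPairs σ)) * ∏ p ∈ exchangedPairs σ, A p.1 p.2 ^ 2 := by
    have hcard : #{i | σ i = i} = N - 2 * #(exchangedPairs σ) :=
      Nat.eq_sub_of_add_eq (by simpa using (card_eq_card_fixed_add_two_mul hσ).symm)
    rw [sign_eq_neg_one_pow_card_exchangedPairs hσ, Finset.prod_neg, hcard, mul_left_comm,
      ← mul_assoc _ ((-1 : ℝ) ^ _)]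
    push_cast
    rw [← mul_pow, neg_one_mul, neg_neg, one_pow, one_mul]
  simp only [det_apply']
  rw [integral_finsetSum _ fun σ _ => (integrable_prod_smul_one_add_sampleY A √t σ).const_mul _,
    PhiFull_eq_sum_isMatching A ht, ← sum_involutive_eq_sum_isMatching, Finset.sum_filter]
  refine Finset.sum_congr rfl fun σ _ => ?_
  rw [integral_const_mul]
  split_ifs with hσ
  · rw [integral_prod_smul_one_add_sampleY_of_involutive hA _ hσ, hterm σ hσ]
  · rw [integral_prod_smul_one_add_sampleY_of_not_involutive A _ hσ, mul_zero]

end GodsilGutman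

section ProductMeasures

variable {ι κ X : Type*} [Fintype ι] [Fintype κ] [MeasurableSpace X] (μ : Measure X)
  [IsProbabilityMeasure μ]

lemma measurePreserving_comp_pi_of_injective {f : ι → κ} (hf : Function.Injective f) :
    MeasurePreserving (fun (x : κ → X) i => x (f i)) (Measure.pi fun _ => μ)
      (Measure.pi fun _ => μ) := by
  have hindep : iIndepFun (fun k (x : κ → X) => x k) (Measure.pi fun _ => μ) :=
    iIndepFun_pi (X := fun _ => id) fun _ => aemeasurable_id
  have hmap := (iIndepFun_iff_map_fun_eq_pi_map
    fun i => (measurable_pi_apply (f i)).aemeasurable).1 (hindep.precomp hf)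
  simp only [fun k => (measurePreserving_eval (fun _ : κ => μ) k).map_eq] at hmap
  exact ⟨by fun_prop, hmap⟩

lemma measurePreserving_curry_pi :
    MeasurePreserving (fun (x : ι × κ → X) i k => x (i, k)) (Measure.pi fun _ => μ)
      (Measure.pi fun _ => Measure.pi fun _ => μ) := by
  have hmap := Measure.infinitePi_map_curry fun (_ : ι) (_ : κ) => μ
  simp only [Measure.infinitePi_eq_pi] at hmap
  exact ⟨by fun_prop, hmap⟩

end ProductMeasures

section BipartiteReduction

open scoped NNReal

variable {m n : ℕ}

lemma castAdd_lt_natAdd (i : Fin m) (j : Fin n) : Fin.castAdd n i < Fin.natAdd m j := by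
  simp only [Fin.lt_def, Fin.val_castAdd, Fin.val_natAdd]
  omega

/-- The position in the strict upper triangle of the edge of `K_{m,n}` joining `p.1` to `p.2`. -/
def crossPair (p : Fin m × Fin n) : PairIdx (m + n) :=
  ⟨(Fin.castAdd n p.1, Fin.natAdd m p.2), castAdd_lt_natAdd p.1 p.2⟩

lemma crossPair_injective : Function.Injective (crossPair (m := m) (n := n)) := by
  rintro ⟨i, j⟩ ⟨i', j'⟩ h
  simpa [crossPair] using h

/-- The `m × n` array of the Gaussians on the edges of `K_{m,n}`, rescaled to variances `v i j`. -/
noncomputable def crossBlock (v : Fin m → Fin n → ℝ≥0) (ξ : PairIdx (m + n) → ℝ) :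
    Fin m → Fin n → ℝ :=
  fun i j => √(v i j : ℝ) * ξ (crossPair (i, j))

lemma measurePreserving_crossBlock (v : Fin m → Fin n → ℝ≥0) :
    MeasurePreserving (crossBlock v) (gaussPi (m + n)) (gaussianMatrix v) :=
  (measurePreserving_pi _ _ fun i => measurePreserving_sqrt_mul (v i)).comp
    ((measurePreserving_curry_pi (gaussianReal 0 1)).comp
      (measurePreserving_comp_pi_of_injective (gaussianReal 0 1) crossPair_injective))

/-- The weights `w / t` of the Gaussian block once `√t` has been factored out of `√t • 1 + Y`. -/
noncomputable def scaledWeights (t : ℝ) (w : Fin m → Fin n → ℝ) : Fin m → Fin n → ℝ≥0 :=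
  fun i j => (w i j / t).toNNReal

lemma bipartiteSkew_transpose (w : Fin m → Fin n → ℝ) : (bipartiteSkew w)ᵀ = -bipartiteSkew w := by
  ext x y
  induction x using Fin.addCases <;> induction y using Fin.addCases <;> simp [bipartiteSkew]

lemma sqrt_smul_one_add_sampleY_bipartiteSkew {t : ℝ} (ht : 0 < t) (w : Fin m → Fin n → ℝ)
    (ξ : PairIdx (m + n) → ℝ) :
    √t • (1 : Matrix (Fin (m + n)) (Fin (m + n)) ℝ) + sampleY (bipartiteSkew w) ξ =
      √t • reindex finSumFinEquiv finSumFinEquiv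
        (fromBlocks 1 (of (crossBlock (scaledWeights t w) ξ))
          (-(of (crossBlock (scaledWeights t w) ξ))ᵀ) 1) := by
  have hscale (i : Fin m) (j : Fin n) (x : ℝ) :
      √(w i j) * x = √t * (√(scaledWeights t w i j : ℝ) * x) := by
    have hsqrt : √((w i j / t).toNNReal : ℝ) = √(w i j / t) := by
      rw [← Real.coe_sqrt, Real.sqrt]
    rw [scaledWeights, hsqrt, ← mul_assoc, ← Real.sqrt_mul ht.le, mul_div_cancel₀ _ ht.ne']
  ext x y
  induction x using Fin.addCases <;> induction y using Fin.addCases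
  · simp [sampleY, bipartiteSkew, one_apply]
  · simp [sampleY, bipartiteSkew, castAdd_lt_natAdd, (castAdd_lt_natAdd _ _).ne, crossBlock,
      crossPair, hscale]
  · simp [sampleY, bipartiteSkew, castAdd_lt_natAdd, (castAdd_lt_natAdd _ _).ne',
      (castAdd_lt_natAdd _ _).not_gt, crossBlock, crossPair, hscale]
  · simp [sampleY, bipartiteSkew, one_apply]

lemma det_sqrt_smul_one_add_sampleY_bipartiteSkew {t : ℝ} (ht : 0 < t) (w : Fin m → Fin n → ℝ)
    (ξ : PairIdx (m + n) → ℝ) :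
    (√t • (1 : Matrix (Fin (m + n)) (Fin (m + n)) ℝ) + sampleY (bipartiteSkew w) ξ).det =
      √t ^ (m + n) * (1 + (of (crossBlock (scaledWeights t w) ξ))ᵀ *
        of (crossBlock (scaledWeights t w) ξ)).det := by
  rw [sqrt_smul_one_add_sampleY_bipartiteSkew ht, det_smul, Fintype.card_fin, det_reindex_self,
    det_fromBlocks_one₁₁, Matrix.neg_mul, sub_neg_eq_add]

lemma one_le_det_one_add_transpose_mul_self (y : Fin m → Fin n → ℝ) :
    1 ≤ (1 + (of y)ᵀ * of y).det := by
  simpa using isSpiked_one.det_le_det_add_transpose_mul_self y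

/-- The loss for `m ≤ n` rows when the row losses, of order `log n / q`, and the `q` rows charged
a crude factor are balanced by `q = √n`. -/
noncomputable def totalLoss (α β : ℝ) (n : ℕ) : ℝ :=
  n * rowLoss α β n √n + √n * Real.log (1 + β * n)

lemma totalLoss_nonneg {β : ℝ} (hβ : 0 ≤ β) (α : ℝ) (n : ℕ) : 0 ≤ totalLoss α β n := by
  have hrow : 0 ≤ rowLoss α β n √n := rowLoss_nonneg hβ n (Real.sqrt_nonneg _)
  have hlog := log_one_add_mul_natCast_nonneg hβ n
  unfold totalLoss
  positivity

lemma logJensenGap_gaussianMatrix_le_totalLoss {v : Fin m → Fin n → ℝ≥0} {α β : ℝ} (hα : 0 < α)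
    (hβ : 0 ≤ β) (hv : ∀ i j, (v i j : ℝ) ∈ Set.Icc α β) (hmn : m ≤ n) (hn : 0 < n) :
    logJensenGap (gaussianMatrix v) (fun y => (1 + (of y)ᵀ * of y).det) ≤ totalLoss α β n := by
  have hqs : √(n : ℝ) + (0 : ℕ) + m ≤ Fintype.card (Fin n) + 1 + (Nat.sqrt n : ℕ) := by
    have := Real.real_sqrt_le_nat_sqrt_succ (a := n)
    have : (m : ℝ) ≤ n := by exact_mod_cast hmn
    rw [Fintype.card_fin, Nat.cast_zero]
    linarith
  have hrow : 0 ≤ rowLoss α β n √n := rowLoss_nonneg hβ n (Real.sqrt_nonneg _)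
  have hlog := log_one_add_mul_natCast_nonneg hβ n
  have hgap := logJensenGap_det_add_transpose_mul_self_le isSpiked_one hα hβ hv
    (Real.sqrt_pos.2 (Nat.cast_pos.2 hn)) _ hqs
  rw [Fintype.card_fin] at hgap
  refine hgap.trans ?_
  unfold totalLoss
  gcongr
  exact Real.nat_sqrt_le_real_sqrt

lemma logJensenGap_det_bipartiteSkew_le {t α β : ℝ} (ht : 0 < t) (hα : 0 < α) (hβ : 0 ≤ β)
    {w : Fin m → Fin n → ℝ} (hw : ∀ i j, w i j / t ∈ Set.Icc α β) (hmn : m ≤ n) (hn : 0 < n) :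
    logJensenGap (gaussPi (m + n)) (fun ξ =>
      (√t • (1 : Matrix (Fin (m + n)) (Fin (m + n)) ℝ) + sampleY (bipartiteSkew w) ξ).det) ≤
      totalLoss α β n := by
  have hv (i : Fin m) (j : Fin n) : (scaledWeights t w i j : ℝ) ∈ Set.Icc α β := by
    rw [scaledWeights, Real.coe_toNNReal _ (hα.le.trans (hw i j).1)]
    exact hw i j
  have hmp := measurePreserving_crossBlock (scaledWeights t w)
  have hint := isSpiked_one.integrable_det_add_transpose_mul_self (scaledWeights t w)
  simp only [det_sqrt_smul_one_add_sampleY_bipartiteSkew ht]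
  refine (logJensenGap_comp hmp (hint.const_mul _).aestronglyMeasurable
    (X := fun y => √t ^ (m + n) * (1 + (of y)ᵀ * of y).det)).trans_le ?_
  rw [logJensenGap_const_mul (pow_pos (Real.sqrt_pos.2 ht) _) hint one_pos
    one_le_det_one_add_transpose_mul_self]
  exact logJensenGap_gaussianMatrix_le_totalLoss hα hβ hv hmn hn

lemma le_det_smul_one_add_sampleY_bipartiteSkew {t : ℝ} (ht : 0 < t) (w : Fin m → Fin n → ℝ)
    (ξ : PairIdx (m + n) → ℝ) :
    √t ^ (m + n) ≤
      (√t • (1 : Matrix (Fin (m + n)) (Fin (m + n)) ℝ) + sampleY (bipartiteSkew w) ξ).det := by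
  rw [det_sqrt_smul_one_add_sampleY_bipartiteSkew ht]
  exact le_mul_of_one_le_right (by positivity) (one_le_det_one_add_transpose_mul_self _)

lemma gaussPi_lt_abs_log_det_sub_log_PhiFull_le {t α β s : ℝ} (ht : 0 < t) (hα : 0 < α)
    (hβ : 0 ≤ β) {w : Fin m → Fin n → ℝ} (hw : ∀ i j, w i j / t ∈ Set.Icc α β) (hmn : m ≤ n)
    (hn : 0 < n) (hs : 1 < s) :
    (gaussPi (m + n)).real {ξ | s <
        |Real.log (√t • (1 : Matrix (Fin (m + n)) (Fin (m + n)) ℝ) +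
            sampleY (bipartiteSkew w) ξ).det - Real.log (PhiFull (bipartiteSkew w) t)|} ≤
      totalLoss α β n / (s - 1) := by
  rw [← integral_det_smul_one_add_sampleY (bipartiteSkew_transpose w) ht.le]
  refine (measureReal_lt_abs_log_sub_log_integral_le
    (integrable_det_smul_one_add_sampleY _ _) (pow_pos (Real.sqrt_pos.2 ht) (m + n))
    (le_det_smul_one_add_sampleY_bipartiteSkew ht w) hs).trans ?_
  have := sub_pos.2 hs
  gcongr
  exact logJensenGap_det_bipartiteSkew_le ht hα hβ hw hmn hn

end BipartiteReduction

section Asymptotics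

open Filter Topology

lemma tendsto_log_one_add_mul_div_sqrt {β : ℝ} (hβ : 0 ≤ β) :
    Tendsto (fun n : ℕ => Real.log (1 + β * n) / √n) atTop (𝓝 0) := by
  have hlog : Tendsto (fun n : ℕ => Real.log n / √n) atTop (𝓝 0) := by
    simpa [Function.comp_def, Real.sqrt_eq_rpow] using
      ((isLittleO_log_rpow_atTop (r := 1 / 2) (by norm_num)).tendsto_div_nhds_zero).comp
        tendsto_natCast_atTop_atTop
  have hsqrt : Tendsto (fun n : ℕ => √(n : ℝ)) atTop atTop :=
    Real.tendsto_sqrt_atTop.comp tendsto_natCast_atTop_atTop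
  have hupper : Tendsto (fun n : ℕ => Real.log (1 + β) / √n + Real.log n / √n) atTop (𝓝 0) := by
    simpa using (hsqrt.const_div_atTop _).add hlog
  refine squeeze_zero' (Eventually.of_forall fun n => ?_) ?_ hupper
  · exact div_nonneg (log_one_add_mul_natCast_nonneg hβ n) (Real.sqrt_nonneg _)
  · filter_upwards [eventually_ge_atTop 1] with n hn
    have hn1 : (1 : ℝ) ≤ n := by exact_mod_cast hn
    rw [← add_div, ← Real.log_mul (by positivity) (by positivity)]
    gcongr
    linarith

lemma tendsto_totalLoss_div {β : ℝ} (hβ : 0 ≤ β) (α : ℝ) :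
    Tendsto (fun n : ℕ => totalLoss α β n / n) atTop (𝓝 0) := by
  set K := Var[fun x => x ^ 2; gaussianReal 0 1] * β ^ 2 / α ^ 2 with hK
  have hlog := tendsto_log_one_add_mul_div_sqrt hβ
  have hsqrt : Tendsto (fun n : ℕ => √(n : ℝ)) atTop atTop :=
    Real.tendsto_sqrt_atTop.comp tendsto_natCast_atTop_atTop
  have hlim : Tendsto (fun n : ℕ => 2 * K / √n + (4 * K + 1) * (Real.log (1 + β * n) / √n))
      atTop (𝓝 0) := by
    simpa using (hsqrt.const_div_atTop _).add (hlog.const_mul (4 * K + 1))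
  refine hlim.congr' ?_
  filter_upwards [eventually_gt_atTop 0] with n hn
  have hn' : (0 : ℝ) < n := Nat.cast_pos.2 hn
  have hsq : (n : ℝ) = √n ^ 2 := (Real.sq_sqrt hn'.le).symm
  have hsqrt_pos : 0 < √(n : ℝ) := Real.sqrt_pos.2 hn'
  rw [totalLoss, rowLoss, hK]
  generalize Real.log (1 + β * n) = l
  generalize √(n : ℝ) = x at *
  rw [hsq]
  field_simp
  ring

lemma tendsto_totalLoss_div_mul_sub_one {β δ : ℝ} (hβ : 0 ≤ β) (α : ℝ) (hδ : 0 < δ) :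
    Tendsto (fun n : ℕ => totalLoss α β n / (δ * n - 1)) atTop (𝓝 0) := by
  have hden : Tendsto (fun n : ℕ => δ - 1 / (n : ℝ)) atTop (𝓝 δ) := by
    simpa using tendsto_const_nhds.sub (tendsto_const_div_atTop_nhds_zero_nat (1 : ℝ))
  have hquot := (tendsto_totalLoss_div hβ α).div hden hδ.ne'
  rw [zero_div] at hquot
  refine hquot.congr' ?_
  filter_upwards [eventually_gt_atTop 0] with n hn
  have hn' : (n : ℝ) ≠ 0 := (Nat.cast_pos.2 hn).ne'
  rw [Pi.div_apply, div_div, mul_sub, mul_one_div_cancel hn', mul_comm (n : ℝ)]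

end Asymptotics

/-- for fixed `0 < b ≤ a`, `t > 0` and `δ > 0`,
`lim_{n→∞} sup_{m ≤ n} sup_{ω : weights in [b²,a²]}
  Pr( (1/(m+n)) |log det(√t I_N + Y_{A(ω)}) - log Φ(t, A(ω))| > δ ) = 0`. -/
theorem bipartite_concentration_at_log_matching_polynomial
    (b a : ℝ) (hb : 0 < b) (hba : b ≤ a) (t : ℝ) (ht : 0 < t)
    (δ : ℝ) (hδ : 0 < δ) :
    ∀ ε : ℝ, 0 < ε → ∃ n₀ : ℕ, ∀ n : ℕ, n₀ ≤ n → ∀ m : ℕ, m ≤ n →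
      ∀ w : Fin m → Fin n → ℝ, (∀ i j, w i j ∈ Set.Icc (b ^ 2) (a ^ 2)) →
        gaussPi (m + n) {ξ | δ < (1 / ((m : ℝ) + n)) *
            |Real.log ((Real.sqrt t • (1 : Matrix (Fin (m + n)) (Fin (m + n)) ℝ) +
                sampleY (bipartiteSkew w) ξ).det) -
              Real.log (PhiFull (bipartiteSkew w) t)|} <
          ENNReal.ofReal ε := by
  intro ε hε
  have hβ : 0 ≤ a ^ 2 / t := by positivity
  obtain ⟨n₀, hsmall⟩ := Filter.eventually_atTop.1
    ((tendsto_totalLoss_div_mul_sub_one hβ (b ^ 2 / t) hδ).eventually_lt_const hε)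
  refine ⟨max n₀ (⌈1 / δ⌉₊ + 1), fun n hn m hmn w hw => ?_⟩
  have hδn : 1 < δ * n := by
    rw [← div_lt_iff₀' hδ]
    exact Nat.lt_of_ceil_lt ((Nat.lt_succ_self _).trans_le (le_of_max_le_right hn))
  have hn_pos : (0 : ℝ) < n := pos_of_mul_pos_right (one_pos.trans hδn) hδ.le
  have hN : (0 : ℝ) < m + n := by positivity
  have hδN : δ * n ≤ δ * (m + n) := by gcongr; exact le_add_of_nonneg_left m.cast_nonneg
  have hw' (i : Fin m) (j : Fin n) : w i j / t ∈ Set.Icc (b ^ 2 / t) (a ^ 2 / t) :=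
    ⟨by gcongr; exact (hw i j).1, by gcongr; exact (hw i j).2⟩
  simp only [one_div, ← div_eq_inv_mul, lt_div_iff₀ hN]
  rw [← ofReal_measureReal, ENNReal.ofReal_lt_ofReal_iff hε]
  calc _ ≤ totalLoss (b ^ 2 / t) (a ^ 2 / t) n / (δ * (m + n) - 1) :=
        gaussPi_lt_abs_log_det_sub_log_PhiFull_le ht (by positivity) hβ hw' hmn
          (Nat.cast_pos.1 hn_pos) (hδn.trans_le hδN)
    _ ≤ totalLoss (b ^ 2 / t) (a ^ 2 / t) n / (δ * n - 1) :=
        div_le_div_of_nonneg_left (totalLoss_nonneg hβ _ n) (by linarith) (by linarith)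
    _ < ε := hsmall n (le_of_max_le_left hn)
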